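/- Up to homeomorphism there are only countably many closed 3-manifolds: there exists a countable family of compact connected topological 3-manifolds without boundary such that every compact connected topological 3-manifold without boundary is homeomorphic to a member of the family. -/

import Mathlib

/-- A bundled closed 3-manifold: a compact connected topological 3-manifold without
boundary. -/
structure Closed3Manifold where
  carrier : Type
  [top : TopologicalSpace carrier]
  [t2 : T2Space carrier]
  [secondCountable : SecondCountableTopology carrier]
  [charted : ChartedSpace (EuclideanSpace ℝ (Fin 3)) carrier]
  [compact : CompactSpace carrier]
  [conn : ConnectedSpace carrier]

attribute [instance] Closed3Manifold.top Closed3Manifold.t2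
  Closed3Manifold.secondCountable Closed3Manifold.charted
  Closed3Manifold.compact Closed3Manifold.conn

open Set Metric Topology



abbrev E3 : Type := Fin 3 → ℝ

structure NP (Ω : Set E3) (ε : ℝ) (f g : E3 → E3) : Prop where
  cf : ContinuousOn f Ω
  cg : ContinuousOn g Ω
  nf : ∀ x ∈ Ω, dist (f x) x ≤ ε
  ng : ∀ x ∈ Ω, dist (g x) x ≤ ε
  gf : ∀ x ∈ Ω, f x ∈ Ω → g (f x) = x
  fg : ∀ x ∈ Ω, g x ∈ Ω → f (g x) = x

theorem NP.symm {Ω : Set E3} {ε : ℝ} {f g : E3 → E3} (h : NP Ω ε f g) : NP Ω ε g f :=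
  ⟨h.cg, h.cf, h.ng, h.nf, h.fg, h.gf⟩

theorem NP.mono {Ω Ω' : Set E3} {ε ε' : ℝ} {f g : E3 → E3} (h : NP Ω ε f g)
    (hs : Ω' ⊆ Ω) (he : ε ≤ ε') : NP Ω' ε' f g :=
  ⟨h.cf.mono hs, h.cg.mono hs, fun x hx => (h.nf x (hs hx)).trans he,
    fun x hx => (h.ng x (hs hx)).trans he, fun x hx hy => h.gf x (hs hx) (hs hy),
    fun x hx hy => h.fg x (hs hx) (hs hy)⟩

def Slab (S : Finset (Fin 3)) (a : ℝ) : Set E3 := {x | ∀ i ∈ S, |x i| < a}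

theorem isOpen_slab (S : Finset (Fin 3)) (a : ℝ) : IsOpen (Slab S a) := by
  have : Slab S a = ⋂ i ∈ S, {x : E3 | |x i| < a} := by
    ext x; simp [Slab]
  rw [this]
  apply isOpen_biInter_finset
  intro i _
  exact isOpen_lt (by fun_prop) continuous_const

theorem cover_near {f : E3 → E3} {y : E3} {r ε : ℝ} (hr : 2 * ε < r) (hε : 0 ≤ ε)
    (hc : ContinuousOn f (closedBall y r)) (ho : IsOpen (f '' ball y r))
    (hn : ∀ x ∈ closedBall y r, dist (f x) x ≤ ε) : y ∈ f '' ball y r := by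
  have hpre : IsPreconnected (ball y (r - ε)) := (convex_ball y (r - ε)).isPreconnected
  have hcl : IsClosed (f '' closedBall y r) :=
    ((isCompact_closedBall y r).image_of_continuousOn hc).isClosed
  by_contra hy
  have hyb : y ∈ closedBall y r := mem_closedBall_self (by linarith)
  have key : ∀ z ∈ ball y (r - ε), z ∈ f '' closedBall y r → z ∈ f '' ball y r := by
    rintro z hz ⟨x, hx, rfl⟩
    refine ⟨x, ?_, rfl⟩
    have h1 := hn x hx
    rw [mem_ball] at hz ⊢
    have := dist_triangle x (f x) y
    rw [dist_comm x (f x)] at this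
    linarith
  have := hpre (f '' ball y r) (f '' closedBall y r)ᶜ ho hcl.isOpen_compl (by
      intro z hz
      by_cases h : z ∈ f '' closedBall y r
      · exact Or.inl (key z hz h)
      · exact Or.inr h)
    ⟨f y, by rw [mem_ball]; have := hn y hyb; linarith, y, mem_ball_self (by linarith), rfl⟩
    ⟨y, mem_ball_self (by linarith), fun h => hy (key y (mem_ball_self (by linarith)) h)⟩
  obtain ⟨z, _, h1, h2⟩ := this
  exact h2 (image_mono ball_subset_closedBall h1)

theorem homeo_of_near {F : E3 → E3} {b : ℝ} (hc : Continuous F) (hi : Function.Injective F)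
    (ho : IsOpenMap F) (hb : ∀ x, dist (F x) x ≤ b) : ∃ G : E3 ≃ₜ E3, ∀ x, G x = F x := by
  have hb0 : 0 ≤ b := dist_nonneg.trans (hb 0)
  have hs : Function.Surjective F := by
    intro y
    obtain ⟨x, _, hx⟩ := cover_near (f := F) (y := y) (r := 2 * b + 1) (ε := b) (by linarith) hb0
      hc.continuousOn (ho _ isOpen_ball) (fun x _ => hb x)
    exact ⟨x, hx⟩
  exact ⟨(Equiv.ofBijective F ⟨hi, hs⟩).toHomeomorphOfContinuousOpen hc ho, fun x => rfl⟩

/-- openness of near-identity pairs -/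
theorem NP.image_open {Ω O : Set E3} {ε : ℝ} {f g : E3 → E3} (h : NP Ω ε f g) (hΩ : IsOpen Ω)
    (hO : IsOpen O) (hs : O ⊆ Ω) (hs' : ∀ x ∈ O, f x ∈ Ω) : IsOpen (f '' O) := by
  have : f '' O = Ω ∩ g ⁻¹' O := by
    ext y; constructor
    · rintro ⟨x, hx, rfl⟩
      exact ⟨hs' x hx, by rw [mem_preimage, h.gf x (hs hx) (hs' x hx)]; exact hx⟩
    · rintro ⟨hy, hgy⟩
      exact ⟨g y, hgy, h.fg y hy (hs hgy)⟩
  rw [this]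
  exact h.cg.isOpen_inter_preimage hΩ hO

noncomputable def lift1 (i : Fin 3) (h : ℝ ≃ₜ ℝ) : E3 ≃ₜ E3 where
  toFun x := Function.update x i (h (x i))
  invFun x := Function.update x i (h.symm (x i))
  left_inv x := by simp
  right_inv x := by simp
  continuous_toFun := continuous_id.update i (h.continuous.comp (continuous_apply i))
  continuous_invFun := continuous_id.update i (h.symm.continuous.comp (continuous_apply i))

theorem lift1_apply (i : Fin 3) (h : ℝ ≃ₜ ℝ) (x : E3) :
    lift1 i h x = Function.update x i (h (x i)) := rfl
theorem lift1_symm_apply (i : Fin 3) (h : ℝ ≃ₜ ℝ) (x : E3) :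
    (lift1 i h).symm x = Function.update x i (h.symm (x i)) := rfl

theorem coord_near {x y : E3} {ε : ℝ} (h : dist x y ≤ ε) (i : Fin 3) : |x i - y i| ≤ ε := by
  have := (dist_le_pi_dist x y i).trans h
  rwa [Real.dist_eq] at this

theorem dist_update_le {x y : E3} {i : Fin 3} {a b d : ℝ} (h : dist x y ≤ d) (hab : |a - b| ≤ d) :
    dist (Function.update x i a) (Function.update y i b) ≤ d := by
  rw [dist_pi_le_iff (dist_nonneg.trans h)]
  intro j
  by_cases hj : j = i
  · subst hj; simpa [Real.dist_eq] using hab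
  · simp only [Function.update_of_ne hj]
    exact (dist_le_pi_dist x y j).trans h

def sh (i : Fin 3) (t : ℝ) (x : E3) : E3 := Function.update x i (x i + t)

theorem sh_sh (i : Fin 3) (s t : ℝ) (x : E3) : sh i s (sh i t x) = sh i (t + s) x := by
  simp [sh, add_assoc]
theorem sh_zero (i : Fin 3) (x : E3) : sh i 0 x = x := by simp [sh]
theorem sh_self (i : Fin 3) (t : ℝ) (x : E3) : sh i t x i = x i + t := by simp [sh]
theorem sh_cont (i : Fin 3) (t : ℝ) : Continuous (sh i t) :=
  continuous_id.update i ((continuous_apply i).add continuous_const)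
theorem sh_dist (i : Fin 3) (t : ℝ) (x y : E3) : dist (sh i t x) (sh i t y) ≤ dist x y := by
  apply dist_update_le le_rfl
  have := coord_near (le_refl (dist x y)) i
  simpa using this

theorem exists_s : ∃ s : ℝ ≃ₜ ℝ, ∃ σ : ℝ ≃ₜ ℝ, (∀ t, σ (s t) = t + 1) ∧ (∀ t, |t| ≤ 2 → s t = t) ∧
    (∀ t, 4 ≤ |t| → s t = t + 1) ∧ (∀ t, t ≤ s t) ∧ (∀ t, t ≤ σ t) ∧ (∀ t, 6 ≤ |t| → σ t = t) ∧
    (∀ t, |t| ≤ 2 → σ t = t + 1) ∧ (∀ t t', |σ t - σ t'| ≤ 2 * |t - t'|) ∧ (∀ t, s t ≤ t + 1) := by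
  let p : ℝ → ℝ := fun t => max 0 (min 1 ((|t| - 2) / 2))
  have hp0 : ∀ t, 0 ≤ p t := fun t => le_max_left _ _
  have hp1 : ∀ t, p t ≤ 1 := fun t => max_le (by norm_num) (min_le_left _ _)
  have hpl : ∀ t t', |p t - p t'| ≤ |t - t'| / 2 := by
    intro t t'
    have h1 : |p t - p t'| ≤ |min 1 ((|t| - 2) / 2) - min 1 ((|t'| - 2) / 2)| := by
      have := abs_max_sub_max_le_max (0:ℝ) (min 1 ((|t| - 2) / 2)) 0 (min 1 ((|t'| - 2) / 2))
      simpa using this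
    have h2 : |min 1 ((|t| - 2) / 2) - min 1 ((|t'| - 2) / 2)| ≤ |(|t| - 2) / 2 - (|t'| - 2) / 2| := by
      have := abs_min_sub_min_le_max (1:ℝ) ((|t| - 2) / 2) 1 ((|t'| - 2) / 2)
      simpa using this
    have h3 : |(|t| - 2) / 2 - (|t'| - 2) / 2| ≤ |t - t'| / 2 := by
      have : (|t| - 2) / 2 - (|t'| - 2) / 2 = (|t| - |t'|) / 2 := by ring
      rw [this, abs_div, abs_two]
      have := abs_abs_sub_abs_le t t'
      linarith
    linarith
  let s0 : ℝ → ℝ := fun t => t + p t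
  have hmono : StrictMono s0 := by
    intro t t' h
    have := hpl t t'
    rw [abs_sub_comm t t', abs_of_pos (sub_pos.2 h)] at this
    have := (abs_le.1 this).2
    show t + p t < t' + p t'
    linarith
  have hcont : Continuous s0 := by fun_prop
  have hsurj : Function.Surjective s0 := by
    intro y
    have := intermediate_value_Icc (a := y - 1) (b := y) (by linarith) hcont.continuousOn
    obtain ⟨x, _, hx⟩ := this (show y ∈ Icc (s0 (y-1)) (s0 y) from
      ⟨by show y - 1 + p (y-1) ≤ y; have := hp1 (y-1); linarith, by show y ≤ y + p y; have := hp0 y; linarith⟩)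
    exact ⟨x, hx⟩
  let s : ℝ ≃ₜ ℝ := (hmono.orderIsoOfSurjective s0 hsurj).toHomeomorph
  have hs : ∀ t, s t = t + p t := fun t => rfl
  have h2 : ∀ t, |t| ≤ 2 → s t = t := by
    intro t ht
    have : p t = 0 := max_eq_left ((min_le_right _ _).trans (by linarith))
    rw [hs, this, add_zero]
  have h4 : ∀ t, 4 ≤ |t| → s t = t + 1 := by
    intro t ht
    have : p t = 1 := by
      show max 0 (min 1 ((|t| - 2) / 2)) = 1
      rw [min_eq_left (by linarith)]; norm_num
    rw [hs, this]
  refine ⟨s, s.symm.trans (Homeomorph.addRight 1), ?_, h2, h4, ?_, ?_, ?_, ?_, ?_, ?_⟩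
  · intro t; simp
  · intro t; rw [hs]; linarith [hp0 t]
  · intro t
    obtain ⟨r, rfl⟩ := s.surjective t
    simp; rw [hs]; linarith [hp1 r]
  · intro t ht
    have h : s (t - 1) = t := by
      rw [h4]
      · ring
      · rcases le_abs.1 ht with h | h
        · exact le_abs.2 (Or.inl (by linarith))
        · exact le_abs.2 (Or.inr (by linarith))
    have h' : s.symm t = t - 1 := by rw [Homeomorph.symm_apply_eq]; exact h.symm
    simp [h']
  · intro t ht
    have h' : s.symm t = t := by rw [Homeomorph.symm_apply_eq]; exact (h2 t ht).symm
    simp [h']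
  · intro t t'
    obtain ⟨r, rfl⟩ := s.surjective t
    obtain ⟨r', rfl⟩ := s.surjective t'
    simp
    rw [hs, hs]
    have h1 := hpl r r'
    have h3 : |r - r'| ≤ |r + p r - (r' + p r')| + |p r - p r'| := by
      have := abs_sub_abs_le_abs_sub (r - r') (-(p r - p r'))
      rw [abs_neg] at this
      have h5 : r - r' - -(p r - p r') = r + p r - (r' + p r') := by ring
      rw [h5] at this
      linarith
    linarith
  · intro t; rw [hs]; linarith [hp1 t]

theorem mem_slab1 {i : Fin 3} {a : ℝ} {x : E3} : x ∈ Slab {i} a ↔ |x i| < a := by simp [Slab]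

theorem exists_c {i : Fin 3} {ε : ℝ} (hε : ε ≤ 1 / 1000) {f g : E3 → E3} (h : NP (Slab {i} 20) ε f g)
    (σ : ℝ ≃ₜ ℝ) (hσ : ∀ t, 6 ≤ |t| → σ t = t) :
    ∃ c : E3 ≃ₜ E3, (∀ y, |y i| < 10 → c y = f (lift1 i σ (g y))) ∧ ∀ y, 10 ≤ |y i| → c y = y := by
  -- generic facts
  have gen : ∀ σ : ℝ ≃ₜ ℝ, (∀ t, 6 ≤ |t| → σ t = t) →
      (∀ y : E3, 6 ≤ |y i| → lift1 i σ y = y) ∧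
      (∀ y : E3, ∀ b : ℝ, 6 ≤ b → |y i| < b → |lift1 i σ y i| < b) := by
    intro σ hσ
    constructor
    · intro y hy; rw [lift1_apply, hσ _ hy]; simp
    · intro y b hb hy
      rw [lift1_apply]; simp only [Function.update_self]
      by_contra hcon
      push Not at hcon
      have h1 := hσ _ (hb.trans hcon)
      have h2 := σ.injective h1
      rw [h2] at hcon
      linarith
  have gnear : ∀ y : E3, |y i| < 20 → |(g y) i - y i| ≤ 1/1000 := fun y hy =>
    (coord_near (h.ng y (mem_slab1.2 hy)) i).trans hε
  have fnear : ∀ y : E3, |y i| < 20 → |(f y) i - y i| ≤ 1/1000 := fun y hy =>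
    (coord_near (h.nf y (mem_slab1.2 hy)) i).trans hε
  let C : (ℝ ≃ₜ ℝ) → E3 → E3 := fun σ y => if |y i| < 10 then f (lift1 i σ (g y)) else y
  have Cfar : ∀ σ : ℝ ≃ₜ ℝ, (∀ t, 6 ≤ |t| → σ t = t) → ∀ y : E3, 7 < |y i| → C σ y = y := by
    intro σ hσ y hy
    by_cases h10 : |y i| < 10
    · simp only [C, if_pos h10]
      have h1 := abs_le.1 (gnear y (by linarith))
      have h2 : 6 ≤ |g y i| ∧ |g y i| < 20 := by
        rw [le_abs, abs_lt]
        rw [lt_abs] at hy; rw [abs_lt] at h10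
        constructor
        · rcases hy with hy | hy
          · left; linarith
          · right; linarith
        · constructor <;> linarith
      rw [(gen σ hσ).1 _ h2.1]
      exact h.fg y (mem_slab1.2 (by linarith)) (mem_slab1.2 h2.2)
    · simp only [C, if_neg h10]
  have Ccont : ∀ σ : ℝ ≃ₜ ℝ, (∀ t, 6 ≤ |t| → σ t = t) → Continuous (C σ) := by
    intro σ hσ
    rw [continuous_iff_continuousAt]
    intro y
    by_cases h10 : |y i| < 10
    · have ho : IsOpen {y : E3 | |y i| < 10} := isOpen_lt (by fun_prop) continuous_const
      have hcon : ContinuousOn (fun y => f (lift1 i σ (g y))) {y : E3 | |y i| < 10} := by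
        apply h.cf.comp ((lift1 i σ).continuous.comp_continuousOn (h.cg.mono _))
        · intro z hz
          rw [mem_ofPred_eq] at hz
          rw [mem_slab1]
          apply (gen σ hσ).2 _ _ (by norm_num)
          have h1 := abs_le.1 (gnear z (by linarith))
          rw [abs_lt] at hz ⊢
          constructor <;> linarith
        · intro z hz; rw [mem_ofPred_eq] at hz; rw [mem_slab1]; linarith
      refine (hcon.continuousAt (ho.mem_nhds h10)).congr ?_
      filter_upwards [ho.mem_nhds h10] with z hz
      simp only [C]; rw [if_pos hz]
    · have ho : IsOpen {y : E3 | 7 < |y i|} := isOpen_lt continuous_const (by fun_prop)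
      refine continuousAt_id.congr ?_
      filter_upwards [ho.mem_nhds (show 7 < |y i| by linarith)] with z hz
      exact (Cfar σ hσ z hz).symm
  have Cinv : ∀ σ : ℝ ≃ₜ ℝ, (∀ t, 6 ≤ |t| → σ t = t) → ∀ y, C σ.symm (C σ y) = y := by
    intro σ hσ y
    have hσ' : ∀ t, 6 ≤ |t| → σ.symm t = t := by
      intro t ht; rw [Homeomorph.symm_apply_eq, hσ t ht]
    by_cases h10 : |y i| < 10
    · have h1 := abs_le.1 (gnear y (by linarith))
      have hgy : |g y i| < 11 := by
        rw [abs_lt] at h10 ⊢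
        constructor <;> linarith
      have hw := (gen σ hσ).2 (g y) 11 (by norm_num) hgy
      have e1 : C σ y = f (lift1 i σ (g y)) := if_pos h10
      have hf := abs_le.1 (fnear (lift1 i σ (g y)) (by linarith))
      have hfw : |f (lift1 i σ (g y)) i| < 20 := by
        rw [abs_lt] at hw ⊢
        constructor <;> linarith
      have hgf := h.gf (lift1 i σ (g y)) (mem_slab1.2 (by linarith)) (mem_slab1.2 hfw)
      by_cases hc : |C σ y i| < 10
      · have : C σ.symm (C σ y) = f (lift1 i σ.symm (g (C σ y))) := if_pos hc
        rw [this, e1, hgf]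
        have : lift1 i σ.symm (lift1 i σ (g y)) = g y := (lift1 i σ).symm_apply_apply (g y)
        rw [this]
        exact h.fg y (mem_slab1.2 (by linarith)) (mem_slab1.2 (by linarith))
      · rw [Cfar σ.symm hσ' _ (by linarith)]
        rw [e1]
        rw [e1] at hc
        have : 6 ≤ |lift1 i σ (g y) i| := by
          rw [not_lt, le_abs] at hc
          rw [le_abs]
          rcases hc with hc | hc
          · left; linarith
          · right; linarith
        have h3 := (gen σ.symm hσ').1 _ this
        have h4 : lift1 i σ.symm (lift1 i σ (g y)) = g y := (lift1 i σ).symm_apply_apply (g y)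
        rw [← h3, h4]
        exact h.fg y (mem_slab1.2 (by linarith)) (mem_slab1.2 (by linarith))
    · have : C σ y = y := if_neg h10
      rw [this]
      exact if_neg h10
  have hσ' : ∀ t, 6 ≤ |t| → σ.symm t = t := by
    intro t ht; rw [Homeomorph.symm_apply_eq, hσ t ht]
  refine ⟨⟨⟨C σ, C σ.symm, Cinv σ hσ, ?_⟩, Ccont σ hσ, Ccont σ.symm hσ'⟩, ?_, ?_⟩
  · have := Cinv σ.symm hσ'
    rwa [Homeomorph.symm_symm] at this
  · intro y hy; exact if_pos hy
  · intro y hy; exact if_neg (not_lt.2 hy)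

theorem exists_P {i : Fin 3} {ε : ℝ} (hε : ε ≤ 1 / 1000) {f g : E3 → E3}
    (h : NP (Slab {i} 20) ε f g) :
    ∃ P : E3 ≃ₜ E3, (∀ y, 11 ≤ |y i| → P y = sh i 1 y) ∧ (∀ y, dist (P y) (sh i 1 y) ≤ 4 * ε) ∧
      (∀ z, |z i| ≤ 3 / 2 → P (f z) = f (sh i 1 z)) ∧
      (∀ y, (12 ≤ y i ∨ (|y i| < 12 ∧ 1 ≤ g y i)) → (12 ≤ P y i ∨ (|P y i| < 12 ∧ 1 ≤ g (P y) i))) ∧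
      (∀ D : Set E3, (∀ x ∈ D, ∀ y : E3, (∀ j, j ≠ i → y j = x j) → y ∈ D) →
        (∀ x ∈ D, x ∈ Slab {i} 20 → f x = x) → ∀ y ∈ D, P y = sh i 1 y) := by
  obtain ⟨s, σ, hσs, hs2, hs4, hsle, hσle, hσ6, hσ2, hσL, hs1⟩ := exists_s
  obtain ⟨c, hc1, hc2⟩ := exists_c hε h σ hσ6
  have hε0 : 0 ≤ ε := dist_nonneg.trans (h.nf 0 (mem_slab1.2 (by simp)))
  have gnear : ∀ y : E3, |y i| < 20 → |(g y) i - y i| ≤ 1/1000 := fun y hy =>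
    (coord_near (h.ng y (mem_slab1.2 hy)) i).trans hε
  have fnear : ∀ y : E3, |y i| < 20 → |(f y) i - y i| ≤ 1/1000 := fun y hy =>
    (coord_near (h.nf y (mem_slab1.2 hy)) i).trans hε
  have hσs' : ∀ y, lift1 i σ (lift1 i s y) = sh i 1 y := by
    intro y; simp only [lift1_apply, sh, Function.update_self, Function.update_idem, hσs]
  have hsi : ∀ y, lift1 i s y i = s (y i) := by intro y; simp [lift1_apply]
  have hσi : ∀ y, lift1 i σ y i = σ (y i) := by intro y; simp [lift1_apply]
  have hPf : ∀ z, |z i| ≤ 3 / 2 → c (lift1 i s (f z)) = f (sh i 1 z) := by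
    intro z hz
    have h1 := abs_le.1 (fnear z (by linarith))
    have h2 : |f z i| ≤ 2 := by
      rw [abs_le] at hz ⊢
      constructor <;> linarith
    have h3 : lift1 i s (f z) = f z := by rw [lift1_apply, hs2 _ h2]; simp
    rw [h3, hc1 _ (by linarith), h.gf z (mem_slab1.2 (by linarith)) (mem_slab1.2 (by linarith))]
    rw [lift1_apply, hσ2 _ (by linarith), sh]
  refine ⟨(lift1 i s).trans c, ?_, ?_, ?_, ?_, ?_⟩
  · intro y hy
    have e : lift1 i s y = sh i 1 y := by rw [lift1_apply, hs4 _ (by linarith), sh]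
    show c (lift1 i s y) = _
    rw [e, hc2]
    rw [sh_self]
    rw [le_abs] at hy ⊢
    rcases hy with hy | hy
    · left; linarith
    · right; linarith
  · intro y
    show dist (c (lift1 i s y)) _ ≤ _
    by_cases h10 : |lift1 i s y i| < 10
    · rw [hc1 _ h10, ← hσs']
      set w := lift1 i s y
      have h1 := gnear w (by linarith)
      have hd := h.ng w (mem_slab1.2 (by linarith))
      have h2 : dist (lift1 i σ (g w)) (lift1 i σ w) ≤ 2 * ε := by
        apply dist_update_le (by linarith)
        have := coord_near hd i
        linarith [hσL (g w i) (w i)]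
      have h3 : |lift1 i σ w i| < 11 := by
        have : lift1 i σ w = sh i 1 y := hσs' y
        rw [this, sh_self]
        have e1 := hsi y
        have e2 := hsle (y i)
        have e3 := hs1 (y i)
        rw [← e1] at e2 e3
        rw [abs_lt] at h10 ⊢
        refine ⟨by linarith, ?_⟩
        by_contra hcon
        have e4 := hs4 (y i) (le_abs.2 (Or.inl (by linarith)))
        rw [← e1] at e4
        linarith
      have h4 := (coord_near h2 i)
      have h5 : |lift1 i σ (g w) i| < 20 := by
        rw [abs_lt] at h3 ⊢; rw [abs_le] at h4
        constructor <;> linarith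
      have h6 := h.nf _ (mem_slab1.2 h5)
      have := dist_triangle (f (lift1 i σ (g w))) (lift1 i σ (g w)) (lift1 i σ w)
      linarith
    · rw [hc2 _ (not_lt.1 h10)]
      have : lift1 i s y = sh i 1 y := by
        rw [← hσs']
        rw [lift1_apply (h := σ), hσ6 _ (by linarith)]; simp
      rw [this, dist_self]; linarith
  · intro z hz
    exact hPf z hz
  · -- invariance
    intro y hy
    show 12 ≤ c (lift1 i s y) i ∨ (|c (lift1 i s y) i| < 12 ∧ 1 ≤ g (c (lift1 i s y)) i)
    set w := lift1 i s y with hw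
    have hwi : y i ≤ w i := by rw [hw, hsi]; exact hsle _
    have hwA : 12 ≤ w i ∨ (|w i| < 12 ∧ 1 ≤ g w i) := by
      by_cases h12 : 12 ≤ w i
      · exact Or.inl h12
      right
      rcases hy with hy | ⟨hy, hgy⟩
      · linarith
      have h1 := abs_le.1 (gnear y (by linarith))
      rw [abs_lt] at hy
      refine ⟨abs_lt.2 ⟨by linarith, by linarith⟩, ?_⟩
      by_cases hy2 : |y i| ≤ 2
      · have : w = y := by rw [hw, lift1_apply, hs2 _ hy2]; simp
        rwa [this]
      · have : 2 < y i := by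
          by_contra hcon
          exact hy2 (abs_le.2 ⟨by linarith, by linarith⟩)
        have h2 := abs_le.1 (gnear w (abs_lt.2 ⟨by linarith, by linarith⟩))
        linarith
    by_cases h10 : |w i| < 10
    · rcases hwA with hwA | ⟨_, hgw⟩
      · rw [abs_lt] at h10; linarith
      rw [hc1 _ h10]
      have h1 := abs_le.1 (gnear w (by linarith))
      rw [abs_lt] at h10
      set v := lift1 i σ (g w) with hv
      have hvi : v i = σ (g w i) := hσi _
      have hv1 : 1 ≤ v i := by rw [hvi]; exact hgw.trans (hσle _)
      have hv2 : v i < 11 := by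
        rw [hvi]
        by_cases h6 : 6 ≤ |g w i|
        · rw [hσ6 _ h6]; linarith
        · by_contra hcon
          have h7 := hσ6 (σ (g w i)) (le_abs.2 (Or.inl (by linarith)))
          have h8 := σ.injective h7
          rw [h8] at hcon
          linarith
      have hvs : |v i| < 20 := abs_lt.2 ⟨by linarith, by linarith⟩
      have h2 := abs_le.1 (fnear v hvs)
      right
      refine ⟨abs_lt.2 ⟨by linarith, by linarith⟩, ?_⟩
      rw [h.gf v (mem_slab1.2 hvs) (mem_slab1.2 (abs_lt.2 ⟨by linarith, by linarith⟩))]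
      exact hv1
    · rw [hc2 _ (not_lt.1 h10)]; exact hwA
  · intro D hD hfD y hy
    show c (lift1 i s y) = _
    have hw : lift1 i s y ∈ D := hD y hy _ (fun j hj => by simp [lift1_apply, hj])
    by_cases h10 : |lift1 i s y i| < 10
    · have hf1 := hfD _ hw (mem_slab1.2 (by linarith))
      have hg1 : g (lift1 i s y) = lift1 i s y := by
        have := h.gf _ (mem_slab1.2 (show |lift1 i s y i| < 20 by linarith)) (by
          rw [hf1]; exact mem_slab1.2 (by linarith))
        rwa [hf1] at this
      rw [hc1 _ h10, hg1, hσs']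
      have hd : sh i 1 y ∈ D := hD y hy _ (fun j hj => by simp [sh, hj])
      apply hfD _ hd
      rw [mem_slab1, sh_self]
      rw [hsi, abs_lt] at h10
      have e2 := hsle (y i)
      have e3 := hs1 (y i)
      exact abs_lt.2 ⟨by linarith, by linarith⟩
    · rw [hc2 _ (not_lt.1 h10)]
      rw [← hσs', lift1_apply (h := σ), hσ6 _ (by linarith)]; simp

theorem zpow_near {i : Fin 3} {ε : ℝ} (hε : ε ≤ 1 / 1000) (hε0 : 0 ≤ ε) (P : E3 ≃ₜ E3)
    (hfar : ∀ y, 11 ≤ |y i| → P y = sh i 1 y) (hnear : ∀ y, dist (P y) (sh i 1 y) ≤ 4 * ε)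
    (w z : E3) (hz : |z i| ≤ 2) (hw : dist w z ≤ ε) (k : ℤ) :
    dist ((P ^ k) w) (sh i k z) ≤ 61 * ε := by
  have hfar' : ∀ y, 12 ≤ |y i| → P⁻¹ y = sh i (-1) y := by
    intro y hy
    have : P (sh i (-1) y) = y := by
      rw [hfar, sh_sh]; · simp [sh_zero]
      rw [sh_self, le_abs] at *
      rcases hy with hy | hy
      · left; linarith
      · right; linarith
    show P.symm y = _
    rw [Homeomorph.symm_apply_eq, this]
  have hnear' : ∀ y, dist (P⁻¹ y) (sh i (-1) y) ≤ 4 * ε := by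
    intro y
    have h1 := hnear (P.symm y)
    have h2 := sh_dist i (-1) (P (P.symm y)) (sh i 1 (P.symm y))
    rw [sh_sh, Homeomorph.apply_symm_apply] at h2
    simp only [add_neg_cancel, sh_zero] at h2
    rw [Homeomorph.apply_symm_apply] at h1
    rw [dist_comm] at h2
    exact h2.trans h1
  have gen : ∀ (Q : E3 ≃ₜ E3) (δ : ℝ), |δ| = 1 → (∀ y, 12 ≤ |y i| → Q y = sh i δ y) →
      (∀ y, dist (Q y) (sh i δ y) ≤ 4 * ε) → ∀ n : ℕ,
      dist ((Q ^ n) w) (sh i (δ * n) z) ≤ ε + 4 * ε * (min n 15 : ℕ) := by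
    intro Q δ hδ hQ1 hQ2 n
    induction n with
    | zero => simpa [sh_zero] using hw
    | succ n ih =>
      rw [pow_succ']
      have e : sh i (δ * (n + 1 : ℕ)) z = sh i δ (sh i (δ * n) z) := by
        rw [sh_sh]; congr 1; push_cast; ring
      rw [e]
      show dist (Q ((Q ^ n) w)) _ ≤ _
      have h1 := sh_dist i δ ((Q ^ n) w) (sh i (δ * n) z)
      by_cases hn : n < 15
      · have h2 := dist_triangle (Q ((Q ^ n) w)) (sh i δ ((Q ^ n) w)) (sh i δ (sh i (δ * n) z))
        have h3 := hQ2 ((Q ^ n) w)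
        rw [min_eq_left hn.le] at ih
        rw [min_eq_left (by omega)]
        push_cast
        linarith
      · rw [hQ1]
        · rw [min_eq_right (by omega)] at ih ⊢
          exact h1.trans ih
        · rw [min_eq_right (by omega)] at ih
          have h4 := abs_le.1 (coord_near ih i)
          rw [sh_self] at h4
          have h5 : (15:ℝ) ≤ n := by exact_mod_cast not_lt.1 hn
          rw [abs_le] at hz
          push_cast at h4
          rcases eq_or_eq_neg_of_abs_eq hδ with rfl | rfl
          · exact le_abs.2 (Or.inl (by linarith))
          · exact le_abs.2 (Or.inr (by linarith))
  have bd : ∀ n : ℕ, ε + 4 * ε * (min n 15 : ℕ) ≤ 61 * ε := by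
    intro n
    have : ((min n 15 : ℕ) : ℝ) ≤ 15 := by exact_mod_cast min_le_right _ _
    nlinarith
  obtain ⟨n, rfl | rfl⟩ := k.eq_nat_or_neg
  · have := gen P 1 (by simp) (fun y hy => hfar y (by linarith)) hnear n
    rw [one_mul] at this
    simpa using this.trans (bd n)
  · have := gen P⁻¹ (-1) (by simp) hfar' hnear' n
    have h2 : P ^ (-(n:ℤ)) = P⁻¹ ^ n := by simp
    rw [h2]
    have h3 : (((-(n:ℤ)) : ℤ) : ℝ) = -1 * n := by push_cast; ring
    rw [h3]
    exact this.trans (bd n)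

theorem ptrick {i : Fin 3} {ε : ℝ} (hε : ε ≤ 1 / 1000) {f g : E3 → E3}
    (h : NP (Slab {i} 20) ε f g) :
    ∃ F : E3 ≃ₜ E3, (∀ x, dist (F x) x ≤ 61 * ε) ∧ (∀ x ∈ Slab {i} (1 / 2), F x = f x) ∧
      (∀ D : Set E3, (∀ x ∈ D, ∀ y : E3, (∀ j, j ≠ i → y j = x j) → y ∈ D) →
        (∀ x ∈ D, x ∈ Slab {i} 20 → f x = x) → ∀ y ∈ D, F y = y) := by
  obtain ⟨P, hfar, hnear, hPf, hA, hD⟩ := exists_P hε h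
  have hε0 : 0 ≤ ε := dist_nonneg.trans (h.nf 0 (mem_slab1.2 (by simp)))
  have gnear : ∀ y : E3, |y i| < 20 → |(g y) i - y i| ≤ 1/1000 := fun y hy =>
    (coord_near (h.ng y (mem_slab1.2 hy)) i).trans hε
  have fnear : ∀ y : E3, |y i| < 20 → |(f y) i - y i| ≤ 1/1000 := fun y hy =>
    (coord_near (h.nf y (mem_slab1.2 hy)) i).trans hε
  let Fk : ℤ → E3 → E3 := fun k x => (P ^ k) (f (sh i (-(k:ℝ)) x))
  let F : E3 → E3 := fun x => Fk ⌊x i⌋ x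
  have hstep : ∀ (k : ℤ) (x : E3), |x i - (k + 1)| ≤ 3 / 2 → Fk (k + 1) x = Fk k x := by
    intro k x hx
    show (P ^ (k + 1)) _ = (P ^ k) _
    rw [zpow_add_one]
    show (P ^ k) (P _) = _
    rw [hPf _ (by rw [sh_self]; push_cast; rw [← sub_eq_add_neg]; exact hx), sh_sh]
    congr 3; push_cast; ring
  have hloc : ∀ (k : ℤ) (x : E3), (k:ℝ) - 1 / 2 < x i → x i < k + 3 / 2 → F x = Fk k x := by
    intro k x h1 h2
    have f1 := Int.floor_le (x i)
    have f2 := Int.lt_floor_add_one (x i)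
    have a1 : k - 1 ≤ ⌊x i⌋ := by
      rw [Int.le_floor]; push_cast; linarith
    have a2 : ⌊x i⌋ < k + 2 := by
      rw [Int.floor_lt]; push_cast; linarith
    have : ⌊x i⌋ = k - 1 ∨ ⌊x i⌋ = k ∨ ⌊x i⌋ = k + 1 := by omega
    rcases this with e | e | e
    · show Fk ⌊x i⌋ x = _
      rw [e]
      have h3 : x i < k := by rw [e] at f2; push_cast at f2; linarith
      have := hstep (k - 1) x (by push_cast; rw [abs_le]; constructor <;> linarith)
      rw [sub_add_cancel] at this
      exact this.symm
    · show Fk ⌊x i⌋ x = _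
      rw [e]
    · show Fk ⌊x i⌋ x = _
      rw [e]
      have h3 : (k:ℝ) + 1 ≤ x i := by rw [e] at f1; push_cast at f1; linarith
      exact hstep k x (by rw [abs_le]; constructor <;> linarith)
  let O : ℤ → Set E3 := fun k => {x | (k:ℝ) - 1 / 2 < x i ∧ x i < k + 3 / 2}
  have hO : ∀ k, IsOpen (O k) := by
    intro k
    have h1 : IsOpen {x : E3 | (k:ℝ) - 1 / 2 < x i} := isOpen_lt continuous_const (by fun_prop)
    have h2 : IsOpen {x : E3 | x i < (k:ℝ) + 3 / 2} := isOpen_lt (by fun_prop) continuous_const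
    exact h1.inter h2
  have hxO : ∀ x : E3, x ∈ O ⌊x i⌋ := by
    intro x
    have f1 := Int.floor_le (x i)
    have f2 := Int.lt_floor_add_one (x i)
    exact ⟨by linarith, by linarith⟩
  have hshO : ∀ k x, x ∈ O k → |sh i (-(k:ℝ)) x i| < 2 := by
    rintro k x ⟨h1, h2⟩
    rw [sh_self, abs_lt]; constructor <;> linarith
  have hcont : Continuous F := by
    rw [continuous_iff_continuousAt]
    intro x
    have hc : ContinuousOn (Fk ⌊x i⌋) (O ⌊x i⌋) := by
      apply (P ^ ⌊x i⌋).continuous.comp_continuousOn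
      apply h.cf.comp (sh_cont i _).continuousOn
      intro y hy
      have := hshO _ y hy
      rw [mem_slab1]; linarith
    refine (hc.continuousAt ((hO _).mem_nhds (hxO x))).congr ?_
    filter_upwards [(hO _).mem_nhds (hxO x)] with y hy
    exact (hloc _ y hy.1 hy.2).symm
  have hopen : IsOpenMap F := by
    intro U hU
    have e : F '' U = ⋃ k : ℤ, (P ^ k) '' (f '' ((sh i (k:ℝ)) ⁻¹' (U ∩ O k))) := by
      ext y; simp only [mem_iUnion]; constructor
      · rintro ⟨x, hx, rfl⟩
        refine ⟨⌊x i⌋, _, ⟨sh i (-(⌊x i⌋:ℝ)) x, ?_, rfl⟩, rfl⟩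
        rw [mem_preimage, sh_sh, neg_add_cancel, sh_zero]
        exact ⟨hx, hxO x⟩
      · rintro ⟨k, _, ⟨z, hz, rfl⟩, rfl⟩
        refine ⟨_, hz.1, ?_⟩
        rw [hloc k _ hz.2.1 hz.2.2]
        show (P ^ k) (f (sh i (-(k:ℝ)) (sh i k z))) = _
        rw [sh_sh, add_neg_cancel, sh_zero]
    rw [e]
    apply isOpen_iUnion
    intro k
    apply (P ^ k).isOpenMap
    have key : ∀ z ∈ (sh i (k:ℝ)) ⁻¹' (U ∩ O k), |z i| < 2 := by
      intro z hz
      have := hshO k _ hz.2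
      rwa [sh_sh, add_neg_cancel, sh_zero] at this
    apply h.image_open (isOpen_slab _ _) ((hU.inter (hO k)).preimage (sh_cont i k))
    · intro z hz
      rw [mem_slab1]; linarith [key z hz]
    · intro z hz
      have h1 := key z hz
      have h2 := abs_le.1 (fnear z (by linarith))
      rw [mem_slab1]
      rw [abs_lt] at h1 ⊢
      constructor <;> linarith
  have hnearF : ∀ x, dist (F x) x ≤ 61 * ε := by
    intro x
    have f1 := Int.floor_le (x i)
    have f2 := Int.lt_floor_add_one (x i)
    have hz : |sh i (-(⌊x i⌋:ℝ)) x i| < 2 := hshO _ x (hxO x)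
    have := zpow_near hε hε0 P hfar hnear (f (sh i (-(⌊x i⌋:ℝ)) x)) (sh i (-(⌊x i⌋:ℝ)) x)
      hz.le (h.nf _ (mem_slab1.2 (by linarith))) ⌊x i⌋
    rwa [sh_sh, neg_add_cancel, sh_zero] at this
  have hinj0 : ∀ (z z' : E3) (j : ℕ), 0 ≤ z i → z i < 1 → 0 ≤ z' i → z' i < 1 →
      f z = (P ^ j) (f z') → j = 0 ∧ z = z' := by
    intro z z' j h1 h2 h3 h4 he
    have s1 : |z i| < 20 := abs_lt.2 ⟨by linarith, by linarith⟩
    have s2 : |z' i| < 20 := abs_lt.2 ⟨by linarith, by linarith⟩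
    have n1 := abs_le.1 (fnear z s1)
    have n2 := abs_le.1 (fnear z' s2)
    have t1 : |f z i| < 12 := abs_lt.2 ⟨by linarith, by linarith⟩
    have t2 : |f z' i| < 12 := abs_lt.2 ⟨by linarith, by linarith⟩
    have gf1 := h.gf z (mem_slab1.2 s1) (mem_slab1.2 (by linarith))
    have gf2 := h.gf z' (mem_slab1.2 s2) (mem_slab1.2 (by linarith))
    cases j with
    | zero =>
      refine ⟨rfl, ?_⟩
      have : f z = f z' := he
      rw [← gf1, ← gf2, this]
    | succ j =>
      exfalso
      have hall : ∀ j : ℕ, 12 ≤ (P ^ (j + 1)) (f z') i ∨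
          (|(P ^ (j + 1)) (f z') i| < 12 ∧ 1 ≤ g ((P ^ (j + 1)) (f z')) i) := by
        intro j
        induction j with
        | zero =>
          right
          rw [zero_add, pow_one, hPf z' (abs_le.2 ⟨by linarith, by linarith⟩)]
          have s3 : |sh i 1 z' i| < 20 := by
            rw [sh_self]; exact abs_lt.2 ⟨by linarith, by linarith⟩
          have n3 := abs_le.1 (fnear _ s3)
          rw [sh_self] at n3
          have t3 : |f (sh i 1 z') i| < 12 := abs_lt.2 ⟨by linarith, by linarith⟩
          refine ⟨t3, ?_⟩
          rw [h.gf _ (mem_slab1.2 s3) (mem_slab1.2 (by linarith)), sh_self]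
          linarith
        | succ j ih =>
          rw [pow_succ']
          exact hA _ ih
      rcases hall j with hh | ⟨_, hh⟩
      · rw [← he] at hh; linarith
      · rw [← he, gf1] at hh; linarith
  have hinj : Function.Injective F := by
    have main : ∀ x x' : E3, ⌊x i⌋ ≤ ⌊x' i⌋ → F x = F x' → x = x' := by
      intro x x' hle he
      obtain ⟨j, hj⟩ := Int.eq_ofNat_of_zero_le (sub_nonneg.2 hle)
      have hj' : ⌊x' i⌋ = ⌊x i⌋ + j := by omega
      have he2 : (P ^ ⌊x i⌋) (f (sh i (-(⌊x i⌋:ℝ)) x)) = (P ^ ⌊x' i⌋) (f (sh i (-(⌊x' i⌋:ℝ)) x')) := he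
      rw [show (P ^ ⌊x' i⌋) = P ^ ⌊x i⌋ * P ^ j by rw [hj', zpow_add, zpow_natCast]] at he2
      have he3 := (P ^ ⌊x i⌋).injective he2
      have f1 := Int.floor_le (x i)
      have f2 := Int.lt_floor_add_one (x i)
      have f3 := Int.floor_le (x' i)
      have f4 := Int.lt_floor_add_one (x' i)
      obtain ⟨j0, e⟩ := hinj0 _ _ j (by rw [sh_self]; linarith) (by rw [sh_self]; linarith)
        (by rw [sh_self]; linarith) (by rw [sh_self]; linarith) he3
      rw [hj', j0] at e
      have := congrArg (sh i (⌊x i⌋:ℝ)) e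
      simpa [sh_sh, sh_zero] using this
    intro x x' he
    rcases le_total ⌊x i⌋ ⌊x' i⌋ with hle | hle
    · exact main x x' hle he
    · exact (main x' x hle he.symm).symm
  obtain ⟨G, hG⟩ := homeo_of_near hcont hinj hopen hnearF
  refine ⟨G, fun x => by rw [hG]; exact hnearF x, ?_, ?_⟩
  · intro x hx
    rw [mem_slab1, abs_lt] at hx
    rw [hG, hloc 0 x (by push_cast; linarith) (by push_cast; linarith)]
    show (P ^ (0:ℤ)) (f (sh i (-((0:ℤ):ℝ)) x)) = f x
    rw [zpow_zero, Int.cast_zero, neg_zero, sh_zero]; rfl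
  · intro D hDc hDf y hy
    rw [hG]
    have hPD := hD D hDc hDf
    have hshD : ∀ t, ∀ x ∈ D, sh i t x ∈ D := fun t x hx =>
      hDc x hx _ (fun j hj => by simp [sh, hj])
    have hpow : ∀ n : ℕ, ∀ x ∈ D, (P ^ n) x = sh i n x := by
      intro n
      induction n with
      | zero => intro x _; simp [sh_zero]
      | succ n ih =>
        intro x hx
        rw [pow_succ']
        show P ((P ^ n) x) = _
        rw [ih x hx, hPD _ (hshD _ _ hx), sh_sh]; push_cast; rfl
    have hzpow : ∀ k : ℤ, ∀ x ∈ D, (P ^ k) x = sh i k x := by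
      intro k x hx
      obtain ⟨n, rfl | rfl⟩ := k.eq_nat_or_neg
      · simpa using hpow n x hx
      · have h1 := hpow n (sh i (-(n:ℝ)) x) (hshD _ _ hx)
        rw [sh_sh, neg_add_cancel, sh_zero] at h1
        rw [zpow_neg, zpow_natCast]
        show (P ^ n).symm x = _
        rw [Homeomorph.symm_apply_eq]; push_cast; exact h1.symm
    show (P ^ ⌊y i⌋) (f (sh i (-(⌊y i⌋:ℝ)) y)) = y
    rw [hDf _ (hshD _ _ hy) (mem_slab1.2 (by linarith [hshO _ y (hxO y)])), hzpow _ _ (hshD _ _ hy),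
      sh_sh, neg_add_cancel, sh_zero]

theorem exists_Lam : ∃ (L : ℂ ≃ₜ ℂ) (δ : ℝ), 0 < δ ∧ (∀ z, ‖z‖ < δ → L z = Complex.exp z - 1) ∧
    (∀ z w, ‖L z - L w‖ ≤ 2 * ‖z - w‖) := by
  let C := lipschitzExtensionConstant ℂ
  have hC : 0 < C := lipschitzExtensionConstant_pos ℂ
  let e : ℂ → ℂ := fun z => Complex.exp z - 1 - z
  have he : HasStrictFDerivAt e (0 : ℂ →L[ℝ] ℂ) 0 := by
    have h1 : HasStrictDerivAt e 0 (0:ℂ) := by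
      have := ((Complex.hasStrictDerivAt_exp 0).sub_const 1).sub (hasStrictDerivAt_id (0:ℂ))
      have h0 : Complex.exp 0 - 1 = 0 := by simp
      rw [h0] at this
      exact this
    have h2 := h1.hasStrictFDerivAt.restrictScalars ℝ
    have h3 : (0 : ℂ →L[ℝ] ℂ) = ContinuousLinearMap.restrictScalars ℝ (ContinuousLinearMap.toSpanSingleton ℂ 0) := by
      apply ContinuousLinearMap.ext; intro z; simp
    rw [h3]
    exact h2
  obtain ⟨s, hs, hl⟩ := he.exists_lipschitzOnWith_of_nnnorm_lt (C⁻¹ / 2) (by simpa using hC)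
  obtain ⟨δ, hδ, hb⟩ := Metric.mem_nhds_iff.1 hs
  obtain ⟨h, hh, heq⟩ := hl.extend_finite_dimension
  have hK : C * (C⁻¹ / 2) = 1 / 2 := by field_simp
  have hh' : LipschitzWith (1 / 2) h := by rw [← hK]; exact hh
  have hd : ∀ z w, ‖h z - h w‖ ≤ 1 / 2 * ‖z - w‖ := by
    intro z w
    have := hh'.norm_sub_le z w
    simpa using this
  have ha : ApproximatesLinearOn (fun z => z + h z) ((ContinuousLinearEquiv.refl ℝ ℂ : ℂ ≃L[ℝ] ℂ) : ℂ →L[ℝ] ℂ) univ (1 / 2) := by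
    intro x _ y _
    have := hd x y
    simp only [ContinuousLinearEquiv.coe_refl, ContinuousLinearMap.coe_id', id_eq]
    rw [show x + h x - (y + h y) - (x - y) = h x - h y by ring]
    simpa using this
  refine ⟨ha.toHomeomorph _ (Or.inr ?_), δ, hδ, ?_, ?_⟩
  · have : ‖((ContinuousLinearEquiv.refl ℝ ℂ).symm : ℂ →L[ℝ] ℂ)‖₊ = 1 := by
      rw [ContinuousLinearEquiv.refl_symm, ContinuousLinearEquiv.coe_refl]
      exact nnnorm_one
    rw [this, inv_one]
    exact NNReal.half_lt_self one_ne_zero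
  · intro z hz
    show z + h z = _
    rw [← heq (hb (by simpa using hz))]
    simp [e]
  · intro z w
    show ‖z + h z - (w + h w)‖ ≤ _
    rw [show z + h z - (w + h w) = (z - w) + (h z - h w) by ring]
    have := norm_add_le (z - w) (h z - h w)
    have := hd z w
    have := norm_nonneg (z - w)
    linarith

def zt (i0 i : Fin 3) (x : E3) : ℂ := ⟨x i0, x i⟩
def up (i0 i : Fin 3) (x : E3) (w : ℂ) : E3 := Function.update (Function.update x i0 w.re) i w.im

theorem zt_up {i0 i : Fin 3} (h : i ≠ i0) (x : E3) (w : ℂ) : zt i0 i (up i0 i x w) = w := by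
  apply Complex.ext <;> simp [zt, up, h.symm]
theorem up_ne {i0 i j : Fin 3} (x : E3) (w : ℂ) (h0 : j ≠ i0) (h1 : j ≠ i) :
    up i0 i x w j = x j := by simp [up, h0, h1]
theorem up_zt {i0 i : Fin 3} (x : E3) : up i0 i x (zt i0 i x) = x := by
  simp [up, zt]
theorem up_up {i0 i : Fin 3} (h : i ≠ i0) (x : E3) (w v : ℂ) :
    up i0 i (up i0 i x w) v = up i0 i x v := by
  ext j
  by_cases h1 : j = i
  · subst h1; simp [up]
  · by_cases h0 : j = i0
    · subst h0; simp [up, h.symm]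
    · simp [up, h0, h1]
theorem zt_cont (i0 i : Fin 3) : Continuous (zt i0 i) := by
  have : zt i0 i = fun x => (x i0 : ℂ) + (x i : ℂ) * Complex.I := by
    ext x; exact (Complex.mk_eq_add_mul_I _ _)
  rw [this]; fun_prop
theorem up_cont {i0 i : Fin 3} {X : Type*} [TopologicalSpace X] {s : Set X} {f : X → E3} {w : X → ℂ}
    (hf : ContinuousOn f s) (hw : ContinuousOn w s) :
    ContinuousOn (fun x => up i0 i (f x) (w x)) s := by
  have hu : Continuous (fun p : E3 × ℂ => up i0 i p.1 p.2) := by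
    unfold up
    apply Continuous.update
    · apply Continuous.update continuous_fst
      exact Complex.continuous_re.comp continuous_snd
    · exact Complex.continuous_im.comp continuous_snd
  exact hu.comp_continuousOn (hf.prodMk hw)
theorem up_dist {i0 i : Fin 3} {x y : E3} {w v : ℂ} {d : ℝ} (h : dist x y ≤ d) (hw : ‖w - v‖ ≤ d) :
    dist (up i0 i x w) (up i0 i y v) ≤ d := by
  apply dist_update_le (dist_update_le h _)
  · rw [← Complex.sub_im]; exact (Complex.abs_im_le_norm _).trans hw
  · rw [← Complex.sub_re]; exact (Complex.abs_re_le_norm _).trans hw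
theorem zt_dist {i0 i : Fin 3} {x y : E3} {d : ℝ} (h : dist x y ≤ d) :
    ‖zt i0 i x - zt i0 i y‖ ≤ 2 * d := by
  have h1 := Complex.norm_le_abs_re_add_abs_im (zt i0 i x - zt i0 i y)
  have h2 := coord_near h i0
  have h3 := coord_near h i
  simp only [zt, Complex.sub_re, Complex.sub_im] at h1 ⊢
  linarith

noncomputable def Ex (i0 i : Fin 3) (x : E3) : E3 := up i0 i x (Complex.exp (zt i0 i x) - 1)

noncomputable def lft (i0 i : Fin 3) (f : E3 → E3) (x : E3) : E3 :=
  up i0 i (f (Ex i0 i x)) (zt i0 i x +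
    Complex.log ((zt i0 i (f (Ex i0 i x)) + 1) / Complex.exp (zt i0 i x)))

theorem Ex_cont (i0 i : Fin 3) : Continuous (Ex i0 i) := by
  rw [← continuousOn_univ]
  apply up_cont continuousOn_id
  have := zt_cont i0 i
  exact (by fun_prop : Continuous fun x => Complex.exp (zt i0 i x) - 1).continuousOn

theorem Ex_slab {i0 i : Fin 3} (hi : i ≠ i0) {S' : Finset (Fin 3)} (h0 : i0 ∈ S') {a' : ℝ}
    {x : E3} (hx : x ∈ Slab S' a') : Ex i0 i x ∈ Slab (insert i S') (Real.exp a' + 2) := by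
  have ha : ‖Complex.exp (zt i0 i x)‖ < Real.exp a' := by
    rw [Complex.norm_exp, Real.exp_lt_exp]
    exact (le_abs_self _).trans_lt (hx i0 h0)
  have ha' : a' + 1 ≤ Real.exp a' := Real.add_one_le_exp a'
  have b1 := Complex.abs_re_le_norm (Complex.exp (zt i0 i x))
  have b2 := Complex.abs_im_le_norm (Complex.exp (zt i0 i x))
  intro j hj
  by_cases h1 : j = i
  · subst h1
    have : Ex i0 j x j = (Complex.exp (zt i0 j x)).im := by simp [Ex, up]
    rw [this]; linarith
  · by_cases h2 : j = i0
    · subst h2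
      have : Ex j i x j = (Complex.exp (zt j i x)).re - 1 := by simp [Ex, up, hi.symm]
      rw [this, abs_lt]
      rw [abs_le] at b1
      constructor <;> linarith
    · rw [Ex, up_ne _ _ h2 h1]
      have := hx j (Finset.mem_of_mem_insert_of_ne hj h1)
      linarith

theorem lft_q {i0 i : Fin 3} {ε a' : ℝ} {f : E3 → E3} {x : E3}
    (hx : |x i0| < a') (hn : dist (f (Ex i0 i x)) (Ex i0 i x) ≤ ε) (hi : i ≠ i0) :
    ‖(zt i0 i (f (Ex i0 i x)) + 1) / Complex.exp (zt i0 i x) - 1‖ ≤ 2 * ε * Real.exp a' := by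
  have hne := Complex.exp_ne_zero (zt i0 i x)
  have h1 : (zt i0 i (f (Ex i0 i x)) + 1) / Complex.exp (zt i0 i x) - 1 =
      (zt i0 i (f (Ex i0 i x)) - zt i0 i (Ex i0 i x)) * (Complex.exp (- zt i0 i x)) := by
    rw [Ex, zt_up hi, Complex.exp_neg]; field_simp; ring
  rw [h1, norm_mul]
  apply mul_le_mul (zt_dist hn) _ (norm_nonneg _) (by linarith [dist_nonneg.trans hn])
  rw [Complex.norm_exp, Real.exp_le_exp]
  exact (neg_le_abs _).trans hx.le

section
variable {i0 i : Fin 3} {S' : Finset (Fin 3)} {ε a' : ℝ} {f g : E3 → E3}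

theorem lft_near (hi : i ≠ i0) (h0 : i0 ∈ S') (ha0 : 0 ≤ a')
    (hκ : 2 * ε * Real.exp a' ≤ 1 / 2) (hn : ∀ x ∈ Slab (insert i S') (Real.exp a' + 2), dist (f x) x ≤ ε)
    {x : E3} (hx : x ∈ Slab S' a') : dist (lft i0 i f x) x ≤ 3 * ε * Real.exp a' := by
  have hq := lft_q (hx i0 h0) (hn _ (Ex_slab hi h0 hx)) hi
  have hε : 0 ≤ ε := dist_nonneg.trans (hn _ (Ex_slab hi h0 hx))
  have he : 1 ≤ Real.exp a' := Real.one_le_exp ha0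
  have hl := Complex.norm_log_one_add_half_le_self (hq.trans hκ)
  rw [add_sub_cancel] at hl
  have : x = up i0 i (Ex i0 i x) (zt i0 i x) := by rw [Ex, up_up hi, up_zt]
  conv_lhs => rw [this]
  have h2 : Ex i0 i (up i0 i (Ex i0 i x) (zt i0 i x)) = Ex i0 i x := by rw [← this]
  rw [lft, h2]
  apply up_dist
  · refine (hn _ (Ex_slab hi h0 hx)).trans ?_
    nlinarith
  · rw [Ex, up_up hi, up_zt, add_sub_cancel_left]
    rw [Ex] at hl hq
    linarith

theorem Ex_lft (hi : i ≠ i0) (h0 : i0 ∈ S')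
    (hκ : 2 * ε * Real.exp a' ≤ 1 / 2) (hn : ∀ x ∈ Slab (insert i S') (Real.exp a' + 2), dist (f x) x ≤ ε)
    {x : E3} (hx : x ∈ Slab S' a') : Ex i0 i (lft i0 i f x) = f (Ex i0 i x) := by
  have hq := lft_q (hx i0 h0) (hn _ (Ex_slab hi h0 hx)) hi
  have hne := Complex.exp_ne_zero (zt i0 i x)
  have hq0 : (zt i0 i (f (Ex i0 i x)) + 1) / Complex.exp (zt i0 i x) ≠ 0 := by
    intro h; rw [h] at hq; norm_num at hq; linarith
  conv_lhs => rw [Ex, lft, up_up hi, zt_up hi, Complex.exp_add, Complex.exp_log hq0]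
  rw [mul_div_cancel₀ _ hne, add_sub_cancel_right, up_zt]

theorem lft_cont (hi : i ≠ i0) (h0 : i0 ∈ S')
    (hκ : 2 * ε * Real.exp a' ≤ 1 / 2) (hn : ∀ x ∈ Slab (insert i S') (Real.exp a' + 2), dist (f x) x ≤ ε)
    (hc : ContinuousOn f (Slab (insert i S') (Real.exp a' + 2))) :
    ContinuousOn (lft i0 i f) (Slab S' a') := by
  have hz := zt_cont i0 i
  have h1 : ContinuousOn (fun x => f (Ex i0 i x)) (Slab S' a') :=
    hc.comp (Ex_cont i0 i).continuousOn (fun x hx => Ex_slab hi h0 hx)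
  have h2 : ContinuousOn (fun x => zt i0 i (f (Ex i0 i x))) (Slab S' a') := hz.comp_continuousOn h1
  apply up_cont h1
  refine hz.continuousOn.add (ContinuousOn.clog ?_ ?_)
  · apply (h2.add continuousOn_const).div (Complex.continuous_exp.comp hz).continuousOn
    intro x _; exact Complex.exp_ne_zero _
  · intro x hx
    have hq := lft_q (hx i0 h0) (hn _ (Ex_slab hi h0 hx)) hi
    have := Complex.mem_slitPlane_of_norm_lt_one (lt_of_le_of_lt (hq.trans hκ) (by norm_num))
    rwa [add_sub_cancel] at this

theorem lft_gf (hi : i ≠ i0) (h0 : i0 ∈ S') (ha0 : 0 ≤ a')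
    (hκ : 2 * ε * Real.exp a' ≤ 1 / 10) (h : NP (Slab (insert i S') (Real.exp a' + 2)) ε f g)
    {x : E3} (hx : x ∈ Slab S' a') (hy : lft i0 i f x ∈ Slab S' a') :
    lft i0 i g (lft i0 i f x) = x := by
  have hκ' : 2 * ε * Real.exp a' ≤ 1 / 2 := hκ.trans (by norm_num)
  have e1 := Ex_lft hi h0 hκ' h.nf hx
  have e2 := Ex_lft hi h0 hκ' h.ng hy
  have hE := Ex_slab hi h0 hx
  have hE2 := Ex_slab hi h0 hy
  rw [e1] at e2 hE2
  rw [h.gf _ hE hE2] at e2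
  have n1 := lft_near hi h0 ha0 hκ' h.nf hx
  have n2 := lft_near hi h0 ha0 hκ' h.ng hy
  set y := lft i0 i g (lft i0 i f x)
  have hd : dist y x ≤ 3 / 10 := (dist_triangle y (lft i0 i f x) x).trans (by linarith)
  have hzt : Complex.exp (zt i0 i y) = Complex.exp (zt i0 i x) := by
    have := congrArg (zt i0 i) e2
    rw [Ex, Ex, zt_up hi, zt_up hi] at this
    exact sub_left_inj.1 this
  rw [Complex.exp_eq_exp_iff_exists_int] at hzt
  obtain ⟨n, hn⟩ := hzt
  have hc := coord_near hd i
  have him := congrArg Complex.im hn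
  simp [zt] at him
  have hn0 : n = 0 := by
    rw [him, add_sub_cancel_left, abs_mul, abs_of_pos Real.two_pi_pos] at hc
    by_contra hne
    have h1 : (1:ℝ) ≤ |(n:ℝ)| := by exact_mod_cast Int.one_le_abs hne
    have := Real.pi_gt_three
    nlinarith
  rw [hn0] at hn
  simp at hn
  have := congrArg (fun w => up i0 i w (zt i0 i x)) e2
  simp only [Ex, up_up hi] at this
  rw [up_zt] at this
  rw [← this, ← hn, up_zt]

theorem lft_NP (hi : i ≠ i0) (h0 : i0 ∈ S') (ha0 : 0 ≤ a')
    (hκ : 2 * ε * Real.exp a' ≤ 1 / 10) (h : NP (Slab (insert i S') (Real.exp a' + 2)) ε f g) :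
    NP (Slab S' a') (3 * ε * Real.exp a') (lft i0 i f) (lft i0 i g) :=
  have hκ' : 2 * ε * Real.exp a' ≤ 1 / 2 := hκ.trans (by norm_num)
  ⟨lft_cont hi h0 hκ' h.nf h.cf, lft_cont hi h0 hκ' h.ng h.cg,
    fun _ hx => lft_near hi h0 ha0 hκ' h.nf hx, fun _ hx => lft_near hi h0 ha0 hκ' h.ng hx,
    fun _ hx hy => lft_gf hi h0 ha0 hκ h hx hy, fun _ hx hy => lft_gf hi h0 ha0 hκ h.symm hx hy⟩
end

noncomputable def Lhat {i0 i : Fin 3} (hi : i ≠ i0) (L : ℂ ≃ₜ ℂ) : E3 ≃ₜ E3 where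
  toFun x := up i0 i x (L (zt i0 i x))
  invFun x := up i0 i x (L.symm (zt i0 i x))
  left_inv x := by simp [zt_up hi, up_up hi, up_zt]
  right_inv x := by simp [zt_up hi, up_up hi, up_zt]
  continuous_toFun := by
    rw [← continuousOn_univ]
    exact up_cont continuousOn_id (L.continuous.comp (zt_cont i0 i)).continuousOn
  continuous_invFun := by
    rw [← continuousOn_univ]
    exact up_cont continuousOn_id (L.symm.continuous.comp (zt_cont i0 i)).continuousOn

def LS (S : Finset (Fin 3)) : Prop :=
  ∃ a : ℝ, 0 < a ∧ ∃ δ : ℝ, 0 < δ ∧ ∀ η : ℝ, 0 < η → ∃ ε : ℝ, 0 < ε ∧ ∀ f g : E3 → E3, NP (Slab S a) ε f g →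
    ∃ F : E3 ≃ₜ E3, (∀ x, dist (F x) x ≤ η) ∧ (∀ x ∈ Slab S δ, F x = f x) ∧
      (∀ D : Set E3, (∀ x ∈ D, ∀ y : E3, (∀ j, j ∉ S → y j = x j) → y ∈ D) →
        (∀ x ∈ D, x ∈ Slab S a → f x = x) → ∀ y ∈ D, F y = y)

theorem LS_insert {i0 i : Fin 3} (hi : i ≠ i0) {S' : Finset (Fin 3)} (h0 : i0 ∈ S') (h : LS S') :
    LS (insert i S') := by
  obtain ⟨a', ha', δ', hδ', H⟩ := h
  obtain ⟨L, δ0, hδ0, hL, hLip⟩ := exists_Lam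
  have hL0 : L.symm 0 = 0 := by
    rw [Homeomorph.symm_apply_eq, hL 0 (by simpa)]; simp
  -- smallness of the inverse
  obtain ⟨δ1, hδ1, hsm⟩ := Metric.continuousAt_iff.1 (L.symm.continuous.continuousAt (x := 0))
    (min (δ0 / 2) (min δ' a')) (by positivity)
  rw [hL0] at hsm
  refine ⟨Real.exp a' + 2, by positivity, min (δ1 / 4) (min δ' a'), by positivity, fun η hη => ?_⟩
  obtain ⟨ε', hε', H'⟩ := H (min (η / 4) (δ0 / 8)) (by positivity)
  refine ⟨min (1 / 20) (ε' / 3) / Real.exp a', by positivity, fun f g hfg => ?_⟩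
  set ε := min (1 / 20) (ε' / 3) / Real.exp a' with hεdef
  have hεe : ε * Real.exp a' = min (1 / 20) (ε' / 3) := by rw [hεdef]; field_simp
  have hm1 := min_le_left (1 / 20) (ε' / 3)
  have hm2 := min_le_right (1 / 20) (ε' / 3)
  have hκ : 2 * ε * Real.exp a' ≤ 1 / 10 := by rw [mul_assoc, hεe]; linarith
  have hκ' : 2 * ε * Real.exp a' ≤ 1 / 2 := hκ.trans (by norm_num)
  have hNP := (lft_NP hi h0 ha'.le hκ hfg).mono subset_rfl
    (show 3 * ε * Real.exp a' ≤ ε' by rw [mul_assoc, hεe]; linarith)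
  obtain ⟨F, hF1, hF2, hF3⟩ := H' _ _ hNP
  let Λ := Lhat hi L
  refine ⟨(Λ.symm.trans F).trans Λ, ?_, ?_, ?_⟩
  · intro x
    obtain ⟨y, rfl⟩ := Λ.surjective x
    show dist (Λ (F (Λ.symm (Λ y)))) (Λ y) ≤ η
    rw [Homeomorph.symm_apply_apply]
    have h1 := hF1 y
    have h2 := min_le_left (η / 4) (δ0 / 8)
    apply up_dist (by linarith)
    have := hLip (zt i0 i (F y)) (zt i0 i y)
    have := zt_dist (i0 := i0) (i := i) h1
    linarith
  · intro x hx
    have hx0 := hx i0 (Finset.mem_insert_of_mem h0)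
    have hxi := hx i (Finset.mem_insert_self _ _)
    have hm3 := min_le_left (δ1 / 4) (min δ' a')
    have hz : ‖zt i0 i x‖ < δ1 := by
      have h1 := Complex.norm_le_abs_re_add_abs_im (zt i0 i x)
      simp only [zt] at h1 ⊢
      linarith
    have hz2 := hsm (x := zt i0 i x) (by simpa using hz)
    rw [dist_zero_right] at hz2
    have hz3 := hz2.trans_le (min_le_left _ _)
    have hz4 := hz2.trans_le (min_le_right _ _)
    set y := Λ.symm x with hy
    have hyz : zt i0 i y = L.symm (zt i0 i x) := zt_up hi _ _
    have hyS : y ∈ Slab S' (min δ' a') := by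
      intro j hj
      by_cases h2 : j = i0
      · have : y i0 = (L.symm (zt i0 i x)).re := by rw [← hyz]; rfl
        rw [h2, this]
        exact (Complex.abs_re_le_norm _).trans_lt hz4
      · by_cases h1 : j = i
        · have : y i = (L.symm (zt i0 i x)).im := by rw [← hyz]; rfl
          rw [h1, this]
          exact (Complex.abs_im_le_norm _).trans_lt hz4
        · have : y j = x j := up_ne _ _ h2 h1
          rw [this]
          exact (hx j (Finset.mem_insert_of_mem hj)).trans_le (min_le_right _ _)
    have hΛEx : ∀ w : E3, ‖zt i0 i w‖ < δ0 → Λ w = Ex i0 i w := by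
      intro w hw
      show up i0 i w _ = up i0 i w _
      rw [hL _ hw]
    show Λ (F y) = f x
    have hFy := hF1 y
    have h2 := min_le_right (η / 4) (δ0 / 8)
    have hsm2 : ‖zt i0 i (F y)‖ < δ0 := by
      have := zt_dist (i0 := i0) (i := i) hFy
      rw [hyz] at this
      have h3 := norm_le_norm_add_norm_sub' (zt i0 i (F y)) (L.symm (zt i0 i x))
      linarith
    have hyx : Ex i0 i y = x := by
      rw [← hΛEx y (by rw [hyz]; linarith), hy, Homeomorph.apply_symm_apply]
    rw [hΛEx _ hsm2, hF2 y (fun j hj => (hyS j hj).trans_le (min_le_left _ _)),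
      Ex_lft hi h0 hκ' hfg.nf (fun j hj => (hyS j hj).trans_le (min_le_right _ _)), hyx]
  · intro D hD hfD y hy
    have hup : ∀ x ∈ D, ∀ w, up i0 i x w ∈ D := by
      intro x hx w
      apply hD x hx
      intro j hj
      rw [Finset.mem_insert, not_or] at hj
      exact up_ne _ _ (fun h => hj.2 (h ▸ h0)) hj.1
    show Λ (F (Λ.symm y)) = y
    have : F (Λ.symm y) = Λ.symm y := by
      apply hF3 D _ _ _ (hup y hy _)
      · intro x hx y hxy
        exact hD x hx y (fun j hj => hxy j (fun h => hj (Finset.mem_insert_of_mem h)))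
      · intro x hx hxS
        have hf := hfD _ (hup x hx _) (Ex_slab hi h0 hxS)
        have hne := Complex.exp_ne_zero (zt i0 i x)
        change f (Ex i0 i x) = Ex i0 i x at hf
        rw [lft, hf, Ex, zt_up hi, sub_add_cancel, div_self hne, Complex.log_one, add_zero,
          up_up hi, up_zt]
    rw [this, Homeomorph.apply_symm_apply]

theorem LS_all (S : Finset (Fin 3)) : LS S := by
  induction S using Finset.induction_on with
  | empty =>
    refine ⟨1, one_pos, 1, one_pos, fun η hη => ⟨η, hη, fun f g h => ?_⟩⟩
    have hu : Slab ∅ 1 = univ := by ext; simp [Slab]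
    rw [hu] at h
    refine ⟨⟨⟨f, g, fun x => h.gf x trivial trivial, fun x => h.fg x trivial trivial⟩,
      continuousOn_univ.1 h.cf, continuousOn_univ.1 h.cg⟩, fun x => h.nf x trivial, fun x _ => rfl, ?_⟩
    intro D _ h2 y hy
    exact h2 y hy (by rw [hu]; trivial)
  | insert i S' hi ih =>
    rcases S'.eq_empty_or_nonempty with rfl | ⟨i0, h0⟩
    · refine ⟨20, by norm_num, 1 / 2, by norm_num, fun η hη => ⟨min (1 / 1000) (η / 61), by positivity,
        fun f g h => ?_⟩⟩
      obtain ⟨F, h1, h2, h3⟩ := ptrick (min_le_left _ _) h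
      refine ⟨F, fun x => (h1 x).trans ?_, h2, ?_⟩
      · have := min_le_right (1 / 1000) (η / 61); linarith
      · intro D hD hf
        exact h3 D (fun x hx y hxy => hD x hx y (fun j hj => hxy j (by simpa using hj))) hf
    · exact LS_insert (i0 := i0) (fun h => hi (by rw [h]; exact h0)) h0 ih

noncomputable def rho (x : E3) : E3 := (2 / max 1 ‖x‖ - 1 / (max 1 ‖x‖) ^ 2) • x
noncomputable def sig (y : E3) : E3 := (1 / (max 1 ‖y‖ * (2 - max 1 ‖y‖))) • y

theorem rho_norm (x : E3) : ‖rho x‖ < 2 := by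
  have h1 : 1 ≤ max 1 ‖x‖ := le_max_left _ _
  have h2 : ‖x‖ ≤ max 1 ‖x‖ := le_max_right _ _
  rw [rho, norm_smul]
  set m := max 1 ‖x‖
  have h3 : 2 / m - 1 / m ^ 2 = (2 * m - 1) / m ^ 2 := by field_simp
  rw [h3, Real.norm_eq_abs, abs_of_nonneg (by apply div_nonneg <;> nlinarith), div_mul_eq_mul_div, div_lt_iff₀ (by positivity)]
  nlinarith [norm_nonneg x]

theorem sig_rho (x : E3) : sig (rho x) = x := by
  rcases le_or_gt ‖x‖ 1 with h | h
  · have : rho x = x := by rw [rho, max_eq_left h]; norm_num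
    rw [this, sig, max_eq_left h]; norm_num
  · have hx : 0 < ‖x‖ := by linarith
    have h3 : 2 / ‖x‖ - 1 / ‖x‖ ^ 2 = (2 * ‖x‖ - 1) / ‖x‖ ^ 2 := by field_simp
    have hn : ‖rho x‖ = 2 - 1 / ‖x‖ := by
      rw [rho, max_eq_right h.le, norm_smul, h3, Real.norm_eq_abs, abs_of_nonneg (by apply div_nonneg <;> nlinarith)]
      field_simp
    have h4 : 1 ≤ 2 - 1 / ‖x‖ := by
      have : 1 / ‖x‖ ≤ 1 := by rw [div_le_one hx]; exact h.le
      linarith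
    rw [sig, hn, max_eq_right h4, rho, max_eq_right h.le, smul_smul, h3]
    convert one_smul ℝ x using 2
    have : 2 * ‖x‖ - 1 ≠ 0 := by linarith
    have h5 : 2 - 1 / ‖x‖ = (2 * ‖x‖ - 1) / ‖x‖ := by field_simp
    have h6 : 2 - (2 - 1 / ‖x‖) = 1 / ‖x‖ := by ring
    rw [h6, h5]
    field_simp

theorem rho_sig {y : E3} (hy : ‖y‖ < 2) : rho (sig y) = y := by
  rcases le_or_gt ‖y‖ 1 with h | h
  · have : sig y = y := by rw [sig, max_eq_left h]; norm_num
    rw [this, rho, max_eq_left h]; norm_num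
  · have hy0 : 0 < ‖y‖ := by linarith
    have hy2 : 0 < 2 - ‖y‖ := by linarith
    have hn : ‖sig y‖ = 1 / (2 - ‖y‖) := by
      rw [sig, max_eq_right h.le, norm_smul, Real.norm_eq_abs, abs_of_nonneg (by positivity)]
      field_simp
    have h4 : 1 ≤ 1 / (2 - ‖y‖) := by rw [le_div_iff₀ hy2]; linarith
    rw [rho, hn, max_eq_right h4, sig, max_eq_right h.le, smul_smul]
    convert one_smul ℝ y using 2
    field_simp
    ring

theorem rho_dist (a b : E3) : dist (rho a) (rho b) ≤ 4 * dist a b / max 1 ‖a‖ := by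
  have hm : 1 ≤ max 1 ‖a‖ := le_max_left _ _
  have hn : 1 ≤ max 1 ‖b‖ := le_max_left _ _
  have hbn : ‖b‖ ≤ max 1 ‖b‖ := le_max_right _ _
  have hmn : |max 1 ‖b‖ - max 1 ‖a‖| ≤ dist a b := by
    have h1 := abs_max_sub_max_le_max (1:ℝ) ‖b‖ 1 ‖a‖
    have h2 := abs_norm_sub_norm_le b a
    rw [dist_comm, dist_eq_norm]
    simp at h1; linarith
  rw [dist_eq_norm, rho, rho]
  set m := max 1 ‖a‖
  set n := max 1 ‖b‖
  have e : (2 / m - 1 / m ^ 2) • a - (2 / n - 1 / n ^ 2) • b =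
      (2 / m - 1 / m ^ 2) • (a - b) + ((2 / m - 1 / m ^ 2) - (2 / n - 1 / n ^ 2)) • b := by
    module
  rw [e]
  refine (norm_add_le _ _).trans ?_
  rw [norm_smul, norm_smul, Real.norm_eq_abs, Real.norm_eq_abs, ← dist_eq_norm a b]
  have hm0 : 0 < m := by linarith
  have hn0 : 0 < n := by linarith
  have k1 : |2 / m - 1 / m ^ 2| ≤ 2 / m := by
    have h3 : 2 / m - 1 / m ^ 2 = (2 * m - 1) / m ^ 2 := by field_simp
    have h4 : 0 ≤ 1 / m ^ 2 := by positivity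
    rw [abs_of_nonneg (by rw [h3]; apply div_nonneg <;> nlinarith)]; linarith
  have k2 : (2 / m - 1 / m ^ 2) - (2 / n - 1 / n ^ 2) = (n - m) * (2 - (1 / m + 1 / n)) / (m * n) := by
    field_simp; ring
  have h1m : 1 / m ≤ 1 := by rw [div_le_one hm0]; exact hm
  have h1n : 1 / n ≤ 1 := by rw [div_le_one hn0]; exact hn
  have h1m' : 0 < 1 / m := by positivity
  have h1n' : 0 < 1 / n := by positivity
  have k3 : |(2 / m - 1 / m ^ 2) - (2 / n - 1 / n ^ 2)| ≤ dist a b * 2 / (m * n) := by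
    rw [k2, abs_div, abs_mul, abs_of_pos (mul_pos hm0 hn0)]
    have : |2 - (1 / m + 1 / n)| ≤ 2 := by rw [abs_le]; constructor <;> linarith
    gcongr
  calc _ ≤ 2 / m * dist a b + dist a b * 2 / (m * n) * n := by gcongr
    _ = _ := by field_simp; ring

theorem sig_max {y : E3} (hy : ‖y‖ < 2) : 1 / max 1 ‖sig y‖ ≤ 2 - ‖y‖ := by
  rcases le_or_gt ‖y‖ 1 with h | h
  · have : 1 / max 1 ‖sig y‖ ≤ 1 := by
      rw [div_le_one (by positivity)]; exact le_max_left _ _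
    linarith
  · have hy2 : 0 < 2 - ‖y‖ := by linarith
    have hn : ‖sig y‖ = 1 / (2 - ‖y‖) := by
      rw [sig, max_eq_right h.le, norm_smul, Real.norm_eq_abs, abs_of_nonneg (by positivity)]
      field_simp
    rw [div_le_iff₀ (by positivity)]
    have h2 : 1 / (2 - ‖y‖) ≤ max 1 ‖sig y‖ := by rw [hn]; exact le_max_right _ _
    calc 1 = (2 - ‖y‖) * (1 / (2 - ‖y‖)) := by field_simp
      _ ≤ _ := by gcongr

open Classical in
noncomputable def sqz (F : E3 → E3) (y : E3) : E3 := if ‖y‖ < 2 then rho (F (sig y)) else y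

theorem sq_sq {F F' : E3 → E3} (h : ∀ x, F (F' x) = x) (y : E3) : sqz F (sqz F' y) = y := by
  by_cases hy : ‖y‖ < 2
  · rw [sqz, sqz, if_pos hy, if_pos (rho_norm _), sig_rho, h, rho_sig hy]
  · have : sqz F' y = y := by rw [sqz, if_neg hy]
    rw [this, sqz, if_neg hy]

theorem sq_near {F : E3 → E3} {b : ℝ} (hb : ∀ x, dist (F x) x ≤ b) (y : E3) :
    dist (sqz F y) y ≤ 4 * b * max 0 (2 - ‖y‖) := by
  have hb0 : 0 ≤ b := dist_nonneg.trans (hb 0)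
  by_cases hy : ‖y‖ < 2
  · have h1 := rho_dist (sig y) (F (sig y))
    rw [rho_sig hy, dist_comm] at h1
    rw [sqz, if_pos hy]
    have h2 := sig_max hy
    have h3 := hb (sig y)
    rw [dist_comm] at h3
    calc _ ≤ _ := h1
      _ = 4 * dist (sig y) (F (sig y)) * (1 / max 1 ‖sig y‖) := by ring
      _ ≤ 4 * b * (2 - ‖y‖) := by gcongr
      _ ≤ _ := by gcongr; exact le_max_right _ _
  · rw [sqz, if_neg hy, dist_self]; positivity

theorem sq_cont {F : E3 → E3} {b : ℝ} (hF : Continuous F) (hb : ∀ x, dist (F x) x ≤ b) :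
    Continuous (sqz F) := by
  rw [continuous_iff_continuousAt]
  intro y
  by_cases hy : ‖y‖ < 2
  · have hU : IsOpen {y : E3 | ‖y‖ < 2} := isOpen_lt continuous_norm continuous_const
    have hr : Continuous rho := by
      unfold rho
      have h1 : ∀ x : E3, max 1 ‖x‖ ≠ 0 := fun x => by positivity
      have h2 : ∀ x : E3, max 1 ‖x‖ ^ 2 ≠ 0 := fun x => by positivity
      have h3 : Continuous fun x : E3 => 2 / max 1 ‖x‖ - 1 / (max 1 ‖x‖) ^ 2 :=
        (continuous_const.div (by fun_prop) h1).sub (continuous_const.div (by fun_prop) h2)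
      exact h3.smul continuous_id
    have hs : ContinuousAt sig y := by
      unfold sig
      suffices h3 : ContinuousAt (fun y : E3 => 1 / (max 1 ‖y‖ * (2 - max 1 ‖y‖))) y from
        h3.smul continuousAt_id
      apply ContinuousAt.div continuousAt_const (by fun_prop)
      have h1 : max 1 ‖y‖ < 2 := max_lt (by norm_num) hy
      have h2 : 0 < max 1 ‖y‖ := by positivity
      have : 0 < max 1 ‖y‖ * (2 - max 1 ‖y‖) := mul_pos h2 (by linarith)
      exact this.ne'
    refine ((hr.comp hF).continuousAt.comp hs).congr ?_
    filter_upwards [hU.mem_nhds hy] with z hz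
    exact (if_pos hz).symm
  · have e : sqz F y = y := if_neg hy
    rw [ContinuousAt, e, tendsto_iff_dist_tendsto_zero]
    have hc : Continuous (fun z : E3 => 4 * b * max 0 (2 - ‖z‖) + dist z y) := by fun_prop
    have ht := hc.tendsto y
    rw [dist_self, add_zero, max_eq_left (by linarith [not_lt.1 hy]), mul_zero] at ht
    refine squeeze_zero (fun _ => dist_nonneg) (fun z => ?_) ht
    exact (dist_triangle _ z _).trans (by linarith [sq_near hb z])

theorem squeeze_F (F : E3 ≃ₜ E3) {b : ℝ} (hb4 : b ≤ 1 / 4) (hb : ∀ x, dist (F x) x ≤ b) :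
    ∃ G : E3 ≃ₜ E3, (∀ y, dist (G y) y ≤ 8 * b) ∧ (∀ y, ‖y‖ ≤ 3 / 4 → G y = F y) ∧
      (∀ y, 2 ≤ ‖y‖ → G y = y) ∧ (∀ y, (∀ t : ℝ, 1 ≤ t → F (t • y) = t • y) → G y = y) := by
  have hb0 : 0 ≤ b := dist_nonneg.trans (hb 0)
  have hb' : ∀ x, dist (F.symm x) x ≤ b := by
    intro x
    have := hb (F.symm x)
    rwa [F.apply_symm_apply, dist_comm] at this
  refine ⟨⟨⟨sqz F, sqz F.symm, sq_sq F.symm_apply_apply, sq_sq F.apply_symm_apply⟩,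
    sq_cont F.continuous hb, sq_cont F.symm.continuous hb'⟩, ?_, ?_, ?_, ?_⟩
  · intro y
    refine (sq_near hb y).trans ?_
    have : max 0 (2 - ‖y‖) ≤ 2 := max_le (by norm_num) (by linarith [norm_nonneg y])
    nlinarith
  · intro y hy
    show sqz F y = F y
    have h1 : sig y = y := by rw [sig, max_eq_left (by linarith)]; norm_num
    have h2 : ‖F y‖ ≤ 1 := by
      have := hb y
      rw [dist_eq_norm] at this
      have := norm_le_norm_add_norm_sub' (F y) y
      linarith
    rw [sqz, if_pos (by linarith), h1, rho, max_eq_left h2]; norm_num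
  · intro y hy
    exact if_neg (not_lt.2 hy)
  · intro y hy
    show sqz F y = y
    by_cases h : ‖y‖ < 2
    · rw [sqz, if_pos h]
      have h1 : F (sig y) = sig y := by
        apply hy
        have h1 : max 1 ‖y‖ < 2 := max_lt (by norm_num) h
        have h2 : 1 ≤ max 1 ‖y‖ := le_max_left _ _
        rw [le_div_iff₀ (by apply mul_pos <;> linarith)]
        nlinarith
      rw [h1, rho_sig h]
    · exact if_neg h

noncomputable def aff (K : E3) (hK : ∀ i, K i ≠ 0) (c : E3) : E3 ≃ₜ E3 where
  toFun x := fun i => K i * (x i - c i)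
  invFun y := fun i => y i / K i + c i
  left_inv x := by ext i; have := hK i; field_simp; ring
  right_inv x := by ext i; have := hK i; field_simp; ring
  continuous_toFun := by fun_prop
  continuous_invFun := by fun_prop

theorem handle (S : Finset (Fin 3)) (c : E3) {ρ : ℝ} (hρ : 0 < ρ) (hρ2 : ρ < 1 / 2) :
    ∃ ρ' : ℝ, 0 < ρ' ∧ ρ' ≤ ρ ∧ ∀ η : ℝ, 0 < η → ∃ ε : ℝ, 0 < ε ∧ ∀ (f g : E3 → E3) (Ω : Set E3),
      (∀ x : E3, (∀ i ∈ S, |x i - c i| < ρ) → (∀ i ∉ S, |x i - c i| < 1 / 2) → x ∈ Ω) →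
      NP Ω ε f g →
      (∀ x ∈ Ω, (∀ i ∈ S, |x i - c i| < ρ) → (∀ i ∉ S, |x i - c i| < 1 / 2) → (∃ i, i ∉ S ∧ 1 / 2 - ρ ≤ |x i - c i|) → f x = x) →
      ∃ G : E3 ≃ₜ E3, (∀ x, dist (G x) x ≤ η) ∧
        (∀ x, (∀ i ∈ S, |x i - c i| < ρ') → (∀ i ∉ S, |x i - c i| < 1 / 2) → G x = f x) ∧
        (∀ x, (∃ i, i ∉ S ∧ 1 / 2 - ρ ≤ |x i - c i|) → G x = x) ∧
        (∀ x, (∃ i ∈ S, ρ ≤ |x i - c i|) → G x = x) := by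
  classical
  obtain ⟨a, ha, δ, hδ, H⟩ := LS_all S
  obtain ⟨K0, hK01, hK02, hK03⟩ : ∃ K0 : ℝ, 1 ≤ K0 ∧ a ≤ K0 * ρ ∧ 2 ≤ K0 * ρ := by
    refine ⟨max 1 (max (a / ρ) (2 / ρ)), le_max_left _ _, ?_, ?_⟩
    · rw [← div_le_iff₀ hρ]; exact (le_max_left _ _).trans (le_max_right _ _)
    · rw [← div_le_iff₀ hρ]; exact (le_max_right _ _).trans (le_max_right _ _)
  have hK0 : 0 < K0 := by linarith
  let K : E3 := fun i => if i ∈ S then K0 else 1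
  have hKS : ∀ i ∈ S, K i = K0 := fun i hi => if_pos hi
  have hKn : ∀ i ∉ S, K i = 1 := fun i hi => if_neg hi
  have hK1 : ∀ i, 1 ≤ K i := by
    intro i; by_cases hi : i ∈ S
    · rw [hKS i hi]; exact hK01
    · rw [hKn i hi]
  have hKle : ∀ i, K i ≤ K0 := by
    intro i; by_cases hi : i ∈ S
    · rw [hKS i hi]
    · rw [hKn i hi]; exact hK01
  have hKp : ∀ i, 0 < K i := fun i => by linarith [hK1 i]
  have hKi : ∀ i, K i ≠ 0 := fun i => (hKp i).ne'
  let A : E3 ≃ₜ E3 := aff K hKi c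
  have hAi : ∀ x i, A x i = K i * (x i - c i) := fun _ _ => rfl
  have hAS : ∀ x, ∀ i ∈ S, |A x i| = K0 * |x i - c i| := by
    intro x i hi; rw [hAi, hKS i hi, abs_mul, abs_of_pos hK0]
  have hAn : ∀ x, ∀ i ∉ S, A x i = x i - c i := by
    intro x i hi; rw [hAi, hKn i hi, one_mul]
  have hAd : ∀ x y, dist (A x) (A y) ≤ K0 * dist x y := by
    intro x y
    rw [dist_pi_le_iff (by positivity)]
    intro i
    rw [hAi, hAi, Real.dist_eq, ← mul_sub, abs_mul, abs_of_pos (hKp i)]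
    have := coord_near (le_refl (dist x y)) i
    rw [show x i - c i - (y i - c i) = x i - y i by ring]
    exact mul_le_mul (hKle i) this (abs_nonneg _) hK0.le
  have hAd' : ∀ x y, dist x y ≤ dist (A x) (A y) := by
    intro x y
    rw [dist_pi_le_iff (by positivity)]
    intro i
    have := coord_near (le_refl (dist (A x) (A y))) i
    rw [hAi, hAi, ← mul_sub, abs_mul, abs_of_pos (hKp i), show x i - c i - (y i - c i) = x i - y i by ring] at this
    rw [Real.dist_eq]
    have := hK1 i
    nlinarith [abs_nonneg (x i - y i)]
  let D : Set E3 := {y | ∃ i, i ∉ S ∧ 1 / 2 - ρ ≤ |y i|}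
  have hDA : ∀ x, A x ∈ D ↔ ∃ i, i ∉ S ∧ 1 / 2 - ρ ≤ |x i - c i| := by
    intro x
    constructor
    · rintro ⟨i, hi, h⟩; rw [hAn x i hi] at h; exact ⟨i, hi, h⟩
    · rintro ⟨i, hi, h⟩; exact ⟨i, hi, by rw [hAn x i hi]; exact h⟩
  have hSl : ∀ x, A x ∈ Slab S a → ∀ i ∈ S, |x i - c i| < ρ := by
    intro x hx i hi
    have := hx i hi
    rw [hAS x i hi] at this
    nlinarith
  refine ⟨min ρ (min (3 / 4) δ / K0), by positivity, min_le_left _ _, fun η hη => ?_⟩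
  obtain ⟨ε', hε', H'⟩ := H (min (1 / 4) (η / 8)) (by positivity)
  refine ⟨min (ρ / 2) (ε' / K0), by positivity, fun f g Ω hΩ h hfid => ?_⟩
  set ε := min (ρ / 2) (ε' / K0) with hεd
  have hε1 : ε ≤ ρ / 2 := min_le_left _ _
  have hε2 : K0 * ε ≤ ε' := by
    have := min_le_right (ρ / 2) (ε' / K0)
    rw [le_div_iff₀ hK0] at this; linarith
  -- the extended conjugated map
  let ex : (E3 → E3) → E3 → E3 := fun f y => if y ∈ D then y else A (f (A.symm y))
  have hexA : ∀ f x, A x ∉ D → ex f (A x) = A (f x) := by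
    intro f x hx
    show (if _ then _ else _) = _
    rw [if_neg hx, A.symm_apply_apply]
  have hexD : ∀ f, ∀ y ∈ D, ex f y = y := fun f y hy => if_pos hy
  have hbox : ∀ x, A x ∈ Slab S a → A x ∉ D → x ∈ Ω := by
    intro x hx hxD
    apply hΩ x (hSl x hx)
    intro i hi
    by_contra hcon
    exact hxD ((hDA x).2 ⟨i, hi, by linarith⟩)
  have hcont : ∀ f : E3 → E3, ContinuousOn f Ω →
      (∀ x ∈ Ω, (∀ i ∈ S, |x i - c i| < ρ) → (∀ i ∉ S, |x i - c i| < 1 / 2) → (∃ i, i ∉ S ∧ 1 / 2 - ρ ≤ |x i - c i|) → f x = x) →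
      ContinuousOn (ex f) (Slab S a) := by
    intro f hf hid
    let U1 : Set E3 := {y | ∀ i ∈ Sᶜ, |y i| < 1 / 2}
    have hU1 : IsOpen U1 := by
      have := isOpen_slab Sᶜ (1 / 2)
      exact this
    let U2 : Set E3 := {y | ∃ i, i ∉ S ∧ 1 / 2 - ρ < |y i|}
    have hU2 : IsOpen U2 := by
      have : U2 = ⋃ i, ⋃ (_ : i ∉ S), {y : E3 | 1 / 2 - ρ < |y i|} := by
        ext y; simp [U2]
      rw [this]
      apply isOpen_iUnion; intro i; apply isOpen_iUnion; intro _
      exact isOpen_lt continuous_const (by fun_prop)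
    have h1 : ContinuousOn (fun y => A (f (A.symm y))) (Slab S a ∩ U1) := by
      apply A.continuous.comp_continuousOn
      apply hf.comp A.symm.continuous.continuousOn
      intro y hy
      obtain ⟨x, rfl⟩ := A.surjective y
      rw [A.symm_apply_apply]
      refine hΩ x (hSl x hy.1) (fun i hi => ?_)
      have := hy.2 i (by simpa using hi)
      rwa [hAn x i hi] at this
    have e1 : ∀ y ∈ Slab S a ∩ U1, ex f y = A (f (A.symm y)) := by
      intro y hy
      obtain ⟨x, rfl⟩ := A.surjective y
      by_cases hD : A x ∈ D
      · have hq : ∀ i ∉ S, |x i - c i| < 1 / 2 := by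
          intro i hi
          have := hy.2 i (by simpa using hi)
          rwa [hAn x i hi] at this
        rw [hexD f _ hD, A.symm_apply_apply, hid x (hΩ x (hSl x hy.1) hq) (hSl x hy.1) hq ((hDA x).1 hD)]
      · exact if_neg hD
    intro y hy
    apply ContinuousAt.continuousWithinAt
    by_cases hyU : y ∈ U1
    · have hop := ((isOpen_slab S a).inter hU1).mem_nhds ⟨hy, hyU⟩
      refine (h1.continuousAt hop).congr ?_
      filter_upwards [hop] with z hz
      exact (e1 z hz).symm
    · have : y ∈ U2 := by
        simp only [U1, mem_ofPred_eq] at hyU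
        push Not at hyU
        obtain ⟨i, hi, h⟩ := hyU
        exact ⟨i, by simpa using hi, by linarith⟩
      refine continuousAt_id.congr ?_
      filter_upwards [hU2.mem_nhds this] with z hz
      obtain ⟨i, hi, h⟩ := hz
      exact (hexD f z ⟨i, hi, h.le⟩).symm
  have hgid : ∀ x ∈ Ω, (∀ i ∈ S, |x i - c i| < ρ) → (∀ i ∉ S, |x i - c i| < 1 / 2) → (∃ i, i ∉ S ∧ 1 / 2 - ρ ≤ |x i - c i|) → g x = x := by
    intro x hx h1 h1' h2
    have h3 := hfid x hx h1 h1' h2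
    have := h.gf x hx (by rw [h3]; exact hx)
    rwa [h3] at this
  have hnear : ∀ f : E3 → E3, (∀ x ∈ Ω, dist (f x) x ≤ ε) → ∀ y ∈ Slab S a, dist (ex f y) y ≤ ε' := by
    intro f hf y hy
    obtain ⟨x, rfl⟩ := A.surjective y
    by_cases hD : A x ∈ D
    · rw [hexD f _ hD, dist_self]; exact hε'.le
    · rw [hexA f x hD]
      refine (hAd _ _).trans ?_
      have := hf x (hbox x hy hD)
      nlinarith
  have hinv : ∀ f g : E3 → E3, NP Ω ε f g → 
      (∀ x ∈ Ω, (∀ i ∈ S, |x i - c i| < ρ) → (∀ i ∉ S, |x i - c i| < 1 / 2) → (∃ i, i ∉ S ∧ 1 / 2 - ρ ≤ |x i - c i|) → g x = x) →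
      ∀ y ∈ Slab S a, ex f y ∈ Slab S a → ex g (ex f y) = y := by
    intro f g h hgid y hy hfy
    obtain ⟨x, rfl⟩ := A.surjective y
    by_cases hD : A x ∈ D
    · rw [hexD f _ hD, hexD g _ hD]
    · have hxΩ := hbox x hy hD
      rw [hexA f x hD] at hfy ⊢
      have hq : ∀ i ∉ S, |f x i - c i| < 1 / 2 := by
        intro i hi
        have h1 : |x i - c i| < 1 / 2 - ρ := by
          by_contra hcon
          exact hD ((hDA x).2 ⟨i, hi, not_lt.1 hcon⟩)
        have h2 := coord_near (h.nf x hxΩ) i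
        have := abs_add_le (f x i - x i) (x i - c i)
        rw [sub_add_sub_cancel] at this
        linarith
      have hfx : f x ∈ Ω := hΩ _ (hSl _ hfy) hq
      have hgf := h.gf x hxΩ hfx
      by_cases hD2 : A (f x) ∈ D
      · rw [hexD g _ hD2]
        rw [hgid _ hfx (hSl _ hfy) hq ((hDA _).1 hD2)] at hgf
        rw [hgf]
      · rw [hexA g _ hD2, hgf]
  obtain ⟨F, hF1, hF2, hF3⟩ := H' (ex f) (ex g)
    ⟨hcont f h.cf hfid, hcont g h.cg hgid, hnear f h.nf, hnear g h.ng, hinv f g h hgid, hinv g f h.symm hfid⟩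
  have hFD : ∀ y ∈ D, F y = y := by
    apply hF3 D _ (fun y hy _ => hexD f y hy)
    rintro x ⟨i, hi, hx⟩ y hxy
    exact ⟨i, hi, by rw [hxy i hi]; exact hx⟩
  obtain ⟨G, hG1, hG2, hG3, hG4⟩ := squeeze_F F (min_le_left _ _) hF1
  have hGD : ∀ y ∈ D, G y = y := by
    rintro y ⟨i, hi, hy⟩
    apply hG4
    intro t ht
    apply hFD
    refine ⟨i, hi, hy.trans ?_⟩
    rw [Pi.smul_apply, smul_eq_mul, abs_mul, abs_of_nonneg (show 0 ≤ t by linarith)]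
    nlinarith [abs_nonneg (y i)]
  refine ⟨(A.trans G).trans A.symm, ?_, ?_, ?_, ?_⟩
  · intro x
    refine (hAd' _ _).trans ?_
    show dist (A (A.symm (G (A x)))) (A x) ≤ η
    rw [A.apply_symm_apply]
    have := hG1 (A x)
    have := min_le_right (1 / 4) (η / 8)
    linarith
  · intro x hx1 hx2
    show A.symm (G (A x)) = f x
    rw [A.symm_apply_eq]
    by_cases hD : A x ∈ D
    · have hx3 : ∀ i ∈ S, |x i - c i| < ρ := fun i hi => (hx1 i hi).trans_le (min_le_left _ _)
      rw [hGD _ hD, hfid x (hΩ x hx3 hx2) hx3 hx2 ((hDA x).1 hD)]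
    · have hs : ∀ i ∈ S, |A x i| < min (3 / 4) δ := by
        intro i hi
        have := (hx1 i hi).trans_le (min_le_right _ _)
        rw [hAS x i hi]
        rw [lt_div_iff₀ hK0] at this
        linarith
      rw [hG2, hF2, hexA f x hD]
      · intro i hi
        exact (hs i hi).trans_le (min_le_right _ _)
      · rw [pi_norm_le_iff_of_nonneg (by norm_num)]
        intro i
        rw [Real.norm_eq_abs]
        by_cases hi : i ∈ S
        · exact ((hs i hi).trans_le (min_le_left _ _)).le
        · by_contra hcon
          exact hD ⟨i, hi, by linarith⟩
  · intro x hx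
    show A.symm (G (A x)) = x
    rw [A.symm_apply_eq]
    exact hGD _ ((hDA x).2 hx)
  · rintro x ⟨i, hi, hx⟩
    show A.symm (G (A x)) = x
    rw [A.symm_apply_eq]
    apply hG3
    have h1 := norm_le_pi_norm (A x) i
    rw [Real.norm_eq_abs, hAS x i hi] at h1
    nlinarith

abbrev Face := Finset (Fin 3) × (Fin 3 → ℤ)
noncomputable def fc (e : Face) : E3 := fun i => if i ∈ e.1 then (e.2 i : ℝ) else e.2 i + 1 / 2
def FN (ρ : ℝ) (e : Face) : Set E3 :=
  {x | (∀ i ∈ e.1, |x i - fc e i| < ρ) ∧ (∀ i ∉ e.1, |x i - fc e i| < 1 / 2 + ρ)}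

theorem fc_mem {e : Face} {i : Fin 3} (h : i ∈ e.1) : fc e i = e.2 i := if_pos h
theorem fc_not {e : Face} {i : Fin 3} (h : i ∉ e.1) : fc e i = e.2 i + 1 / 2 := if_neg h

def IZ (Ω : Set E3) (Z : Finset Face) : Prop :=
  ∃ ρ : ℝ, 0 < ρ ∧ ρ < 1 / 2 ∧ ∀ η : ℝ, 0 < η → ∃ ε : ℝ, 0 < ε ∧ ∀ f g, NP Ω ε f g →
    ∃ F : E3 ≃ₜ E3, (∀ x, dist (F x) x ≤ η) ∧ ∀ e ∈ Z, ∀ x ∈ FN ρ e, F x = f x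

theorem bdry {S : Finset (Fin 3)} {v : Fin 3 → ℤ} {Z : Finset Face}
    (hb : ∀ i ∉ S, (insert i S, v) ∈ Z ∧ (insert i S, Function.update v i (v i + 1)) ∈ Z)
    {ρ : ℝ} {x : E3} (h1 : ∀ i ∈ S, |x i - fc (S, v) i| < ρ)
    (h2 : ∀ i ∉ S, |x i - fc (S, v) i| < 1 / 2 + ρ) (h3 : ∃ i, i ∉ S ∧ 1 / 2 - ρ < |x i - fc (S, v) i|) :
    ∃ e ∈ Z, x ∈ FN ρ e := by
  obtain ⟨i, hi, h4⟩ := h3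
  have h5 := h2 i hi
  have hins : ∀ j, j ∉ insert i S → j ∉ S ∧ j ≠ i := by
    intro j hj; rw [Finset.mem_insert, not_or] at hj; exact ⟨hj.2, hj.1⟩
  rw [fc_not (e := (S, v)) hi] at h4 h5
  simp only at h4 h5
  rcases le_total 0 (x i - (v i + 1 / 2)) with h | h
  · rw [abs_of_nonneg h] at h4 h5
    refine ⟨_, (hb i hi).2, ?_, ?_⟩
    · intro j hj
      rw [fc_mem hj]
      by_cases hji : j = i
      · subst hji; simp only [Function.update_self]; push_cast; rw [abs_lt]; constructor <;> linarith
      · have hj' : j ∈ S := Finset.mem_of_mem_insert_of_ne hj hji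
        have := h1 j hj'
        rw [fc_mem (e := (S, v)) hj'] at this
        simpa [hji] using this
    · intro j hj
      have := h2 j (hins j hj).1
      rw [fc_not hj]
      rw [fc_not (e := (S, v)) (hins j hj).1] at this
      simp only [Function.update_of_ne (hins j hj).2]; exact this
  · rw [abs_of_nonpos h] at h4 h5
    refine ⟨_, (hb i hi).1, ?_, ?_⟩
    · intro j hj
      rw [fc_mem hj]
      by_cases hji : j = i
      · subst hji; rw [abs_lt]; constructor <;> linarith
      · have hj' : j ∈ S := Finset.mem_of_mem_insert_of_ne hj hji
        have := h1 j hj'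
        rwa [fc_mem (e := (S, v)) hj'] at this
    · intro j hj
      have := h2 j (hins j hj).1
      rw [fc_not hj]
      rwa [fc_not (e := (S, v)) (hins j hj).1] at this

theorem disj {e e' : Face} (hc : e.1.card ≤ e'.1.card) {ρ : ℝ} (hρ2 : ρ < 1 / 2)
    {x : E3} (hx : x ∈ FN ρ e') (h1 : ∀ i ∈ e.1, |x i - fc e i| < ρ)
    (h2 : ∀ i ∉ e.1, |x i - fc e i| < 1 / 2 - ρ) : e' = e := by
  obtain ⟨hx1, hx2⟩ := hx
  have hsub : e'.1 ⊆ e.1 := by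
    intro i hi
    by_contra hn
    have a1 := hx1 i hi
    have a2 := h2 i hn
    rw [fc_mem hi, abs_lt] at a1
    rw [fc_not hn, abs_lt] at a2
    have b1 : ((e.2 i : ℤ) : ℝ) < e'.2 i := by linarith
    have b2 : ((e'.2 i : ℤ) : ℝ) < e.2 i + 1 := by linarith
    norm_cast at b1 b2
    omega
  have hS : e'.1 = e.1 := Finset.eq_of_subset_of_card_le hsub hc
  refine Prod.ext hS (funext fun i => ?_)
  by_cases hi : i ∈ e.1
  · have a1 := hx1 i (hS ▸ hi)
    have a2 := h1 i hi
    rw [fc_mem (hS ▸ hi), abs_lt] at a1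
    rw [fc_mem hi, abs_lt] at a2
    have b1 : ((e.2 i : ℤ) : ℝ) < e'.2 i + 1 := by linarith
    have b2 : ((e'.2 i : ℤ) : ℝ) < e.2 i + 1 := by linarith
    norm_cast at b1 b2
    omega
  · have a1 := hx2 i (by rw [hS]; exact hi)
    have a2 := h2 i hi
    rw [fc_not (by rw [hS]; exact hi), abs_lt] at a1
    rw [fc_not hi, abs_lt] at a2
    have b1 : ((e.2 i : ℤ) : ℝ) < e'.2 i + 1 := by linarith
    have b2 : ((e'.2 i : ℤ) : ℝ) < e.2 i + 1 := by linarith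
    norm_cast at b1 b2
    omega

theorem IZ_step {Ω : Set E3} {Z : Finset Face} (hZ : IZ Ω Z) {e : Face}
    (hΩ : ball (fc e) 2 ⊆ Ω) (he : e ∉ Z) (hc : ∀ e' ∈ Z, e.1.card ≤ e'.1.card)
    (hb : ∀ i ∉ e.1, (insert i e.1, e.2) ∈ Z ∧ (insert i e.1, Function.update e.2 i (e.2 i + 1)) ∈ Z) :
    IZ Ω (insert e Z) := by
  obtain ⟨ρ, hρ, hρ2, H⟩ := hZ
  obtain ⟨ρ', hρ', hρ'', HH⟩ := handle e.1 (fc e) (ρ := ρ / 2) (by linarith) (by linarith)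
  refine ⟨ρ', hρ', by linarith, fun η hη => ?_⟩
  obtain ⟨ε1, hε1, H1⟩ := HH (η / 2) (by positivity)
  obtain ⟨ε2, hε2, H2⟩ := H (min 1 (min (η / 2) (ε1 / 2))) (by positivity)
  refine ⟨min ε2 (ε1 / 2), by positivity, fun f g h => ?_⟩
  obtain ⟨F, hF1, hF2⟩ := H2 f g (h.mono subset_rfl (min_le_left _ _))
  set η1 := min 1 (min (η / 2) (ε1 / 2))
  have m1 : η1 ≤ 1 := min_le_left _ _
  have m2 : η1 ≤ η / 2 := (min_le_right _ _).trans (min_le_left _ _)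
  have m3 : η1 ≤ ε1 / 2 := (min_le_right _ _).trans (min_le_right _ _)
  have m4 : min ε2 (ε1 / 2) ≤ ε1 / 2 := min_le_right _ _
  have hFs : ∀ x, dist (F.symm x) x ≤ η1 := by
    intro x
    have := hF1 (F.symm x)
    rwa [F.apply_symm_apply, dist_comm] at this
  have hNP : NP (Ω ∩ F ⁻¹' Ω) ε1 (fun x => F.symm (f x)) (fun x => g (F x)) := by
    refine ⟨?_, ?_, ?_, ?_, ?_, ?_⟩
    · exact F.symm.continuous.comp_continuousOn (h.cf.mono inter_subset_left)
    · exact h.cg.comp F.continuous.continuousOn (fun x hx => hx.2)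
    · intro x hx
      refine (dist_triangle _ (f x) _).trans ?_
      linarith [hFs (f x), h.nf x hx.1]
    · intro x hx
      refine (dist_triangle _ (F x) _).trans ?_
      linarith [h.ng (F x) hx.2, hF1 x]
    · intro x hx hy
      have := hy.2
      simp only [mem_preimage, F.apply_symm_apply] at this ⊢
      exact h.gf x hx.1 this
    · intro x hx hy
      show F.symm (f (g (F x))) = x
      rw [h.fg _ hx.2 hy.1, F.symm_apply_apply]
  have hbox : ∀ x : E3, (∀ i ∈ e.1, |x i - fc e i| < ρ / 2) → (∀ i ∉ e.1, |x i - fc e i| < 1 / 2) →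
      x ∈ Ω ∩ F ⁻¹' Ω := by
    intro x h1 h2
    have hd : dist x (fc e) ≤ 1 / 2 := by
      rw [dist_pi_le_iff (by norm_num)]
      intro i
      rw [Real.dist_eq]
      by_cases hi : i ∈ e.1
      · linarith [h1 i hi]
      · exact (h2 i hi).le
    refine ⟨hΩ (by rw [mem_ball]; linarith), hΩ ?_⟩
    rw [mem_ball]
    have := dist_triangle (F x) x (fc e)
    linarith [hF1 x]
  obtain ⟨G, hG1, hG2, hG3, hG4⟩ := H1 _ _ _ hbox hNP (by
    rintro x _ h1 h2 ⟨i, hi, h3⟩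
    obtain ⟨e', he', hx'⟩ := bdry (S := e.1) (v := e.2) hb (ρ := ρ) (x := x)
      (fun i hi => (h1 i hi).trans (by linarith)) (fun i hi => (h2 i hi).trans (by linarith))
      ⟨i, hi, by change 1 / 2 - ρ < |x i - fc e i|; linarith⟩
    show F.symm (f x) = x
    rw [← hF2 e' he' x hx', F.symm_apply_apply])
  refine ⟨G.trans F, ?_, ?_⟩
  · intro x
    refine (dist_triangle _ (G x) _).trans ?_
    have := hF1 (G x)
    show dist (F (G x)) (G x) + _ ≤ η
    linarith [hG1 x]
  · intro e' he' x hx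
    show F (G x) = f x
    rw [Finset.mem_insert] at he'
    rcases he' with rfl | he'
    · by_cases hin : ∀ i ∉ e'.1, |x i - fc e' i| < 1 / 2
      · rw [hG2 x hx.1 hin, F.apply_symm_apply]
      · push Not at hin
        obtain ⟨i, hi, h3⟩ := hin
        rw [hG3 x ⟨i, hi, by linarith⟩]
        obtain ⟨e2, he2, hx'⟩ := bdry (S := e'.1) (v := e'.2) hb (ρ := ρ) (x := x)
          (fun i hi => (hx.1 i hi).trans_le (by linarith)) (fun i hi => (hx.2 i hi).trans_le (by linarith))
          ⟨i, hi, by change 1 / 2 - ρ < |x i - fc e' i|; linarith⟩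
        exact hF2 e2 he2 x hx'
    · have hx' : x ∈ FN (ρ / 2) e' :=
        ⟨fun i hi => (hx.1 i hi).trans_le (by linarith), fun i hi => (hx.2 i hi).trans_le (by linarith)⟩
      have hx'' : x ∈ FN ρ e' :=
        ⟨fun i hi => (hx.1 i hi).trans_le (by linarith), fun i hi => (hx.2 i hi).trans_le (by linarith)⟩
      have : G x = x := by
        by_cases h1 : ∀ i ∈ e.1, |x i - fc e i| < ρ / 2
        · by_cases h2 : ∀ i ∉ e.1, |x i - fc e i| < 1 / 2 - ρ / 2
          · exact absurd (disj (hc e' he') (by linarith) hx' h1 h2 ▸ he') he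
          · push Not at h2
            obtain ⟨i, hi, h3⟩ := h2
            exact hG3 x ⟨i, hi, h3⟩
        · push Not at h1
          obtain ⟨i, hi, h3⟩ := h1
          exact hG4 x ⟨i, hi, h3⟩
      rw [this]
      exact hF2 e' he' x hx''

theorem IZ_all {Ω : Set E3} (n : ℕ) : ∀ (Z : Finset Face), Z.card = n → (∀ e ∈ Z, ball (fc e) 2 ⊆ Ω) →
    (∀ e ∈ Z, ∀ i ∉ e.1, (insert i e.1, e.2) ∈ Z ∧ (insert i e.1, Function.update e.2 i (e.2 i + 1)) ∈ Z) →
    IZ Ω Z := by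
  classical
  induction n with
  | zero =>
    intro Z hZ _ _
    rw [Finset.card_eq_zero] at hZ
    subst hZ
    exact ⟨1 / 4, by norm_num, by norm_num, fun η hη => ⟨1, one_pos, fun f g _ =>
      ⟨Homeomorph.refl _, fun x => by simpa using hη.le, fun e he => by simp at he⟩⟩⟩
  | succ n ih =>
    intro Z hZ hΩ hb
    have hne : Z.Nonempty := by rw [← Finset.card_pos, hZ]; omega
    obtain ⟨e, he, hmin⟩ := Finset.exists_min_image Z (fun e => e.1.card) hne
    rw [← Finset.insert_erase he]
    have key : ∀ e' ∈ Z, ∀ i ∉ e'.1, ∀ w, (insert i e'.1, w) ≠ e := by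
      intro e' he' i hi w h
      have := hmin e' he'
      rw [← h, Finset.card_insert_of_notMem hi] at this
      omega
    apply IZ_step
    · apply ih
      · rw [Finset.card_erase_of_mem he, hZ]; rfl
      · intro e' he'; exact hΩ e' (Finset.mem_of_mem_erase he')
      · intro e' he' i hi
        have h1 := Finset.mem_of_mem_erase he'
        exact ⟨Finset.mem_erase.2 ⟨key e' h1 i hi _, (hb e' h1 i hi).1⟩,
          Finset.mem_erase.2 ⟨key e' h1 i hi _, (hb e' h1 i hi).2⟩⟩
    · exact hΩ e he
    · simp
    · intro e' he'; exact hmin e' (Finset.mem_of_mem_erase he')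
    · intro i hi
      exact ⟨Finset.mem_erase.2 ⟨key e he i hi _, (hb e he i hi).1⟩,
          Finset.mem_erase.2 ⟨key e he i hi _, (hb e he i hi).2⟩⟩

theorem ext_NP {C Ω : Set E3} (hC : Bornology.IsBounded C) (hΩ : ∀ x ∈ C, ball x 3 ⊆ Ω) :
    ∀ η : ℝ, 0 < η → ∃ ε : ℝ, 0 < ε ∧ ∀ f g, NP Ω ε f g →
      ∃ F : E3 ≃ₜ E3, (∀ x, dist (F x) x ≤ η) ∧ ∀ x ∈ C, F x = f x := by
  classical
  let T : Set Face := {e | ∃ x ∈ C, ∀ i, (i ∉ e.1 → e.2 i = ⌊x i⌋) ∧ (i ∈ e.1 → e.2 i = ⌊x i⌋ ∨ e.2 i = ⌊x i⌋ + 1)}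
  have hTf : T.Finite := by
    obtain ⟨R, hR⟩ := hC.subset_closedBall 0
    have hfin : (Set.univ ×ˢ (Set.pi Set.univ (fun _ : Fin 3 => Set.Icc ⌊-R⌋ (⌊R⌋ + 1))) : Set Face).Finite :=
      Set.finite_univ.prod (Set.Finite.pi (fun _ => Set.finite_Icc _ _))
    apply hfin.subset
    rintro e ⟨x, hx, h⟩
    refine ⟨trivial, fun i _ => ?_⟩
    have h1 := norm_le_pi_norm x i
    have h2 := hR hx
    rw [mem_closedBall_zero_iff] at h2
    rw [Real.norm_eq_abs] at h1
    have h3 := abs_le.1 (h1.trans h2)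
    have h4 : ⌊-R⌋ ≤ ⌊x i⌋ := Int.floor_le_floor h3.1
    have h5 : ⌊x i⌋ ≤ ⌊R⌋ := Int.floor_le_floor h3.2
    have h6 : e.2 i = ⌊x i⌋ ∨ e.2 i = ⌊x i⌋ + 1 := by
      by_cases hi : i ∈ e.1
      · exact (h i).2 hi
      · exact Or.inl ((h i).1 hi)
    simp only [Set.mem_Icc]
    omega
  obtain ⟨ρ, hρ, hρ2, H⟩ := IZ_all (Ω := Ω) hTf.toFinset.card hTf.toFinset rfl (by
    intro e he
    rw [Set.Finite.mem_toFinset] at he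
    obtain ⟨x, hx, h⟩ := he
    refine Subset.trans ?_ (hΩ x hx)
    apply ball_subset_ball'
    have : dist (fc e) x ≤ 1 := by
      rw [dist_pi_le_iff (by norm_num)]
      intro i
      have f1 := Int.floor_le (x i)
      have f2 := Int.lt_floor_add_one (x i)
      rw [Real.dist_eq]
      by_cases hi : i ∈ e.1
      · rw [fc_mem hi]
        rcases (h i).2 hi with h1 | h1
        · rw [h1, abs_le]; constructor <;> linarith
        · rw [h1, abs_le]; push_cast; constructor <;> linarith
      · rw [fc_not hi, (h i).1 hi, abs_le]; constructor <;> linarith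
    linarith) (by
    intro e he i hi
    rw [Set.Finite.mem_toFinset] at he
    simp only [Set.Finite.mem_toFinset]
    obtain ⟨x, hx, h⟩ := he
    refine ⟨⟨x, hx, fun j => ⟨fun hj => ?_, fun hj => ?_⟩⟩, ⟨x, hx, fun j => ⟨fun hj => ?_, fun hj => ?_⟩⟩⟩
    · simp only [Finset.mem_insert, not_or] at hj
      exact (h j).1 hj.2
    · by_cases hj2 : j ∈ e.1
      · exact (h j).2 hj2
      · exact Or.inl ((h j).1 hj2)
    · simp only [Finset.mem_insert, not_or] at hj
      simp only [Function.update_of_ne hj.1]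
      exact (h j).1 hj.2
    · by_cases hji : j = i
      · subst hji
        right
        simp only [Function.update_self, (h j).1 hi]
      · simp only [Function.update_of_ne hji]
        exact (h j).2 (Finset.mem_of_mem_insert_of_ne hj hji))
  intro η hη
  obtain ⟨ε, hε, H'⟩ := H η hη
  refine ⟨ε, hε, fun f g h => ?_⟩
  obtain ⟨F, hF1, hF2⟩ := H' f g h
  refine ⟨F, hF1, fun x hx => hF2 (∅, fun i => ⌊x i⌋) ?_ x ?_⟩
  · rw [Set.Finite.mem_toFinset]
    exact ⟨x, hx, fun i => ⟨fun _ => rfl, fun h => by simp at h⟩⟩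
  · refine ⟨fun i hi => by simp at hi, fun i hi => ?_⟩
    rw [fc_not hi]
    have f1 := Int.floor_le (x i)
    have f2 := Int.lt_floor_add_one (x i)
    simp only
    rw [abs_lt]; constructor <;> linarith

theorem extension {C U : Set E3} (hC : IsCompact C) (hU : IsOpen U) (hCU : C ⊆ U) (η : ℝ) (hη : 0 < η) :
    ∃ ε : ℝ, 0 < ε ∧ ∀ f : E3 → E3, ContinuousOn f U → InjOn f U →
      (∀ V, V ⊆ U → IsOpen V → IsOpen (f '' V)) → (∀ x ∈ U, dist (f x) x ≤ ε) →
      ∃ F : E3 ≃ₜ E3, (∀ x, dist (F x) x ≤ η) ∧ ∀ x ∈ C, F x = f x := by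
  obtain ⟨r, hr, hrU⟩ := hC.exists_thickening_subset_open hU hCU
  let l : ℝ := 6 / r
  have hl : 0 < l := by positivity
  let A : E3 ≃ₜ E3 := Homeomorph.smulOfNeZero l hl.ne'
  have hA : ∀ x y, dist (A x) (A y) = l * dist x y := by
    intro x y
    show dist (l • x) (l • y) = _
    rw [dist_smul₀, Real.norm_eq_abs, abs_of_pos hl]
  let Ω : Set E3 := thickening (r / 2) C
  have hΩU : ∀ x ∈ Ω, closedBall x (r / 4) ⊆ U := by
    intro x hx y hy
    obtain ⟨z, hz, hxz⟩ := mem_thickening_iff.1 hx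
    apply hrU
    rw [mem_thickening_iff]
    refine ⟨z, hz, ?_⟩
    rw [mem_closedBall] at hy
    linarith [dist_triangle y x z]
  have hΩC : ∀ x ∈ A '' C, ball x 3 ⊆ A '' Ω := by
    rintro _ ⟨x, hx, rfl⟩ y hy
    refine ⟨A.symm y, ?_, A.apply_symm_apply y⟩
    rw [mem_thickening_iff]
    refine ⟨x, hx, ?_⟩
    obtain ⟨z, rfl⟩ := A.surjective y
    rw [A.symm_apply_apply]
    rw [mem_ball, hA] at hy
    have : l * (r / 2) = 3 := by simp only [l]; field_simp; norm_num
    nlinarith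
  obtain ⟨ε, hε, H⟩ := ext_NP (hC.image A.continuous).isBounded hΩC (l * η) (by positivity)
  refine ⟨min (ε / l) (r / 16), by positivity, fun f hf hi ho hn => ?_⟩
  set ε1 := min (ε / l) (r / 16)
  have e1 : l * ε1 ≤ ε := by
    have := min_le_left (ε / l) (r / 16)
    rw [le_div_iff₀ hl] at this; linarith
  have e2 : ε1 ≤ r / 16 := min_le_right _ _
  have e0 : 0 < ε1 := by positivity
  have hsur : ∀ x ∈ Ω, ∃ z ∈ U, f z = x := by
    intro x hx
    have hs := hΩU x hx
    obtain ⟨z, hz, h⟩ := cover_near (f := f) (y := x) (r := r / 4) (ε := ε1) (by linarith) e0.le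
      (hf.mono hs) (ho _ (ball_subset_closedBall.trans hs) isOpen_ball) (fun z hz => hn z (hs hz))
    exact ⟨z, hs (ball_subset_closedBall hz), h⟩
  have hΩs : Ω ⊆ U := fun x hx => hΩU x hx (mem_closedBall_self (by positivity))
  let g := Function.invFunOn f U
  have hg1 : ∀ x ∈ Ω, g x ∈ U := fun x hx => Function.invFunOn_mem (hsur x hx)
  have hg2 : ∀ x ∈ Ω, f (g x) = x := fun x hx => Function.invFunOn_eq (hsur x hx)
  have hg3 : ∀ z ∈ U, g (f z) = z := fun z hz => hi.leftInvOn_invFunOn hz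
  have hNP : NP Ω ε1 f g := by
    refine ⟨hf.mono hΩs, ?_, fun x hx => hn x (hΩs hx), ?_, fun x hx _ => hg3 x (hΩs hx), fun x hx _ => hg2 x hx⟩
    · intro y hy
      rw [ContinuousWithinAt, Filter.tendsto_def]
      intro V hV
      obtain ⟨W, hWV, hW, hgW⟩ := _root_.mem_nhds_iff.1 hV
      have hop := ho (W ∩ U) inter_subset_right (hW.inter hU)
      have : f '' (W ∩ U) ∈ 𝓝 y := hop.mem_nhds ⟨g y, ⟨hgW, hg1 y hy⟩, hg2 y hy⟩
      apply mem_nhdsWithin_of_mem_nhds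
      filter_upwards [this]
      rintro _ ⟨z, hz, rfl⟩
      rw [mem_preimage, hg3 z hz.2]
      exact hWV hz.1
    · intro x hx
      have := hn (g x) (hg1 x hx)
      rwa [hg2 x hx, dist_comm] at this
  have hNP' : NP (A '' Ω) ε (fun y => A (f (A.symm y))) (fun y => A (g (A.symm y))) := by
    have hcA : ∀ f : E3 → E3, ContinuousOn f Ω → ContinuousOn (fun y => A (f (A.symm y))) (A '' Ω) := by
      intro f hf
      apply A.continuous.comp_continuousOn
      apply hf.comp A.symm.continuous.continuousOn
      rintro _ ⟨x, hx, rfl⟩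
      rwa [A.symm_apply_apply]
    refine ⟨hcA f hNP.cf, hcA g hNP.cg, ?_, ?_, ?_, ?_⟩
    · rintro _ ⟨x, hx, rfl⟩
      rw [A.symm_apply_apply, hA]
      nlinarith [hNP.nf x hx]
    · rintro _ ⟨x, hx, rfl⟩
      rw [A.symm_apply_apply, hA]
      nlinarith [hNP.ng x hx]
    · rintro _ ⟨x, hx, rfl⟩ h
      simp only [A.symm_apply_apply] at h ⊢
      rw [hNP.gf x hx ((A.injective.mem_set_image).1 h)]
    · rintro _ ⟨x, hx, rfl⟩ h
      simp only [A.symm_apply_apply] at h ⊢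
      rw [hNP.fg x hx ((A.injective.mem_set_image).1 h)]
  obtain ⟨F, hF1, hF2⟩ := H _ _ hNP'
  refine ⟨(A.trans F).trans A.symm, ?_, ?_⟩
  · intro x
    have h1 := hF1 (A x)
    have h2 := hA (A.symm (F (A x))) x
    rw [A.apply_symm_apply] at h2
    rw [h2] at h1
    exact le_of_mul_le_mul_left h1 hl
  · intro x hx
    show A.symm (F (A x)) = f x
    rw [hF2 _ ⟨x, hx, rfl⟩]
    simp only [A.symm_apply_apply]

def Close {k : ℕ} {M N : Type} (δ : ℝ) (h : Fin k → E3 → M) (g : Fin k → E3 → N) : Prop :=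
  ∀ i j x y, x ∈ closedBall (0 : E3) 4 → y ∈ closedBall (0 : E3) 4 → h i x = h j y →
    ∃ x' y', dist x' x ≤ δ ∧ dist y' y ≤ δ ∧ g i x' = g j y'

theorem Close.mono {k : ℕ} {M N : Type} {δ δ' : ℝ} {h : Fin k → E3 → M} {g : Fin k → E3 → N}
    (H : Close δ h g) (hd : δ ≤ δ') : Close δ' h g := by
  intro i j x y hx hy e
  obtain ⟨x', y', h1, h2, h3⟩ := H i j x y hx hy e
  exact ⟨x', y', h1.trans hd, h2.trans hd, h3⟩

theorem fin_min {k : ℕ} (s : Fin k → ℝ) (hs : ∀ i, 0 < s i) : ∃ σ : ℝ, 0 < σ ∧ ∀ i, σ ≤ s i := by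
  rcases isEmpty_or_nonempty (Fin k) with h | h
  · exact ⟨1, one_pos, fun i => (h.false i).elim⟩
  · obtain ⟨i, hi⟩ := Finite.exists_min s
    exact ⟨s i, hs i, hi⟩

section
variable {M : Type} [TopologicalSpace M] [T2Space M]

theorem lemA {a b : E3 → M} (ha : Continuous a) (hb : Continuous b) {K K' : Set E3} (hK : IsCompact K)
    (hK' : IsCompact K') {O : Set M} (hO : IsOpen O) (H : ∀ z ∈ K, ∀ x ∈ K', a z = b x → b x ∈ O) :
    ∃ σ : ℝ, 0 < σ ∧ ∀ z ∈ K, ∀ x ∈ K', ∀ z' x', dist z' z < σ → dist x' x < σ → a z' = b x' → b x ∈ O := by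
  have hcl : IsClosed {q : E3 × E3 | a q.1 = b q.2} := isClosed_eq (by fun_prop) (by fun_prop)
  have hO' : IsOpen {q : E3 × E3 | b q.2 ∈ O} := hO.preimage (by fun_prop : Continuous fun q : E3 × E3 => b q.2)
  have hQ : IsCompact ((K ×ˢ K') \ {q : E3 × E3 | b q.2 ∈ O}) := (hK.prod hK').diff hO'
  obtain ⟨σ, h0, h1⟩ := hQ.exists_thickening_subset_open hcl.isOpen_compl (by
    rintro ⟨z, x⟩ ⟨⟨hz, hx⟩, hn⟩ he
    exact hn (H z hz x hx he))
  refine ⟨σ, h0, fun z hz x hx z' x' d1 d2 he => ?_⟩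
  by_contra hn
  have : (z', x') ∈ thickening σ ((K ×ˢ K') \ {q : E3 × E3 | b q.2 ∈ O}) := by
    rw [mem_thickening_iff]
    exact ⟨(z, x), ⟨⟨hz, hx⟩, hn⟩, by rw [Prod.dist_eq]; exact max_lt d1 d2⟩
  exact h1 this he

theorem lemB {a b : E3 → M} (ha : Continuous a) (hb : Continuous b) (hbi : Function.Injective b)
    {K : Set E3} (hK : IsCompact K) {τ : ℝ} (hτ : 0 < τ) :
    ∃ σ : ℝ, 0 < σ ∧ ∀ z ∈ K, ∀ x ∈ K, ∀ y ∈ K, ∀ w, dist w z < σ → a z = b x → a w = b y → dist y x < τ := by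
  have hcl : IsClosed {q : E3 × E3 × E3 | a q.1 = b q.2.2} := isClosed_eq (by fun_prop) (by fun_prop)
  have hcl2 : IsClosed {q : E3 × E3 × E3 | a q.1 = b q.2.1} := isClosed_eq (by fun_prop) (by fun_prop)
  have hcl3 : IsClosed {q : E3 × E3 × E3 | τ ≤ dist q.2.2 q.2.1} := isClosed_le (by fun_prop) (by fun_prop)
  have hQ : IsCompact ((K ×ˢ (K ×ˢ K)) ∩ ({q : E3 × E3 × E3 | a q.1 = b q.2.1} ∩ {q : E3 × E3 × E3 | τ ≤ dist q.2.2 q.2.1})) :=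
    (hK.prod (hK.prod hK)).inter_right (hcl2.inter hcl3)
  obtain ⟨σ, h0, h1⟩ := hQ.exists_thickening_subset_open hcl.isOpen_compl (by
    rintro ⟨z, x, y⟩ ⟨_, h2, h3⟩ he
    have h2' : a z = b x := h2
    have h3' : τ ≤ dist y x := h3
    have he' : a z = b y := he
    have := hbi (h2'.symm.trans he')
    rw [this, dist_self] at h3'
    linarith)
  refine ⟨σ, h0, fun z hz x hx y hy w d1 h2 he => ?_⟩
  by_contra hn
  refine h1 (?_ : (w, x, y) ∈ _) he
  rw [mem_thickening_iff]
  refine ⟨(z, x, y), ⟨⟨hz, hx, hy⟩, h2, not_lt.1 hn⟩, ?_⟩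
  rw [Prod.dist_eq, dist_self]
  exact max_lt d1 h0
end

def WW {k : ℕ} {M : Type} (h : Fin k → E3 → M) (j : ℕ) (r : ℝ) : Set M :=
  {p | ∃ i : Fin k, i.1 < j ∧ p ∈ h i '' ball 0 r}

structure GG {k : ℕ} {M N : Type} [TopologicalSpace M] [TopologicalSpace N]
    (h : Fin k → E3 → M) (g : Fin k → E3 → N) (W : Set M) (η : ℝ) (φ : M → N) : Prop where
  c : ContinuousOn φ W
  i : InjOn φ W
  o : ∀ V, V ⊆ W → IsOpen V → IsOpen (φ '' V)
  n : ∀ i, ∀ x ∈ ball (0 : E3) 3, h i x ∈ W → ∃ x', g i x' = φ (h i x) ∧ dist x' x ≤ η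

def PP {k : ℕ} {M : Type} [TopologicalSpace M] (h : Fin k → E3 → M) (j : ℕ) (r : ℝ) : Prop :=
  ∀ η : ℝ, 0 < η → ∃ δ : ℝ, 0 < δ ∧ ∀ (N : Type) [TopologicalSpace N] [T2Space N] (g : Fin k → E3 → N),
    (∀ i, IsOpenEmbedding (g i)) → Close δ h g → Close δ g h → ∃ φ : M → N, GG h g (WW h j r) η φ

theorem isOpen_WW {k : ℕ} {M : Type} [TopologicalSpace M] {h : Fin k → E3 → M}
    (hh : ∀ i, IsOpenEmbedding (h i)) (j : ℕ) (r : ℝ) : IsOpen (WW h j r) := by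
  have : WW h j r = ⋃ i : Fin k, ⋃ _ : i.1 < j, h i '' ball 0 r := by
    ext p; simp [WW]
  rw [this]
  exact isOpen_iUnion fun i => isOpen_iUnion fun _ => (hh i).isOpenMap _ isOpen_ball

theorem near_aux {k : ℕ} {M N : Type} [TopologicalSpace N] [T2Space N]
    {h : Fin k → E3 → M} {g : Fin k → E3 → N} (hg : ∀ i, IsOpenEmbedding (g i)) {i j : Fin k}
    {τ σ δ η1 : ℝ} (hτ : 0 < τ) (hτ1 : τ ≤ 1) (hστ : σ ≤ τ) (hη1 : η1 ≤ σ / 4) (hδ0 : 0 < δ) (hδ : δ ≤ σ / 8)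
    (hB : ∀ z ∈ closedBall (0 : E3) 5, ∀ x ∈ closedBall (0 : E3) 5, ∀ y ∈ closedBall (0 : E3) 5, ∀ w,
      dist w z < σ → h j z = h i x → h j w = h i y → dist y x < τ / 4)
    (h1 : Close δ h g) (h2 : Close δ g h) {x z u : E3} (hx : x ∈ ball (0 : E3) 3) (hz : z ∈ ball (0 : E3) 2)
    (hxz : h i x = h j z) (hu : dist u z ≤ η1) : ∃ x', g i x' = g j u ∧ dist x' x ≤ τ := by
  rw [mem_ball] at hx hz
  obtain ⟨x1, z1, d1, d2, e⟩ := h1 i j x z (by rw [mem_closedBall]; linarith) (by rw [mem_closedBall]; linarith) hxz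
  have hη0 : 0 ≤ η1 := dist_nonneg.trans hu
  have hpre : IsPreconnected (ball z1 (η1 + 2 * δ)) := (convex_ball _ _).isPreconnected
  have hcl : IsClosed (g i '' closedBall x (τ / 2)) :=
    ((isCompact_closedBall x (τ / 2)).image (hg i).continuous).isClosed
  by_contra hcon
  obtain ⟨w, hw, ⟨y, hy, hyw⟩, hwv⟩ := hpre (g j ⁻¹' (g i '' ball x τ)) (g j ⁻¹' (g i '' closedBall x (τ / 2))ᶜ)
    (((hg i).isOpenMap _ isOpen_ball).preimage (hg j).continuous) (hcl.isOpen_compl.preimage (hg j).continuous)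
    (by
      intro w _
      by_cases hw : g j w ∈ g i '' closedBall x (τ / 2)
      · exact Or.inl (image_mono (closedBall_subset_ball (by linarith)) hw)
      · exact Or.inr hw)
    ⟨z1, mem_ball_self (by linarith), x1, by rw [mem_ball]; linarith, e⟩
    ⟨u, by
      rw [mem_ball]
      have := dist_triangle u z z1
      rw [dist_comm z z1] at this
      linarith, by
      rintro ⟨x', hx', e'⟩
      rw [mem_closedBall] at hx'
      exact hcon ⟨x', e', by linarith⟩⟩
  rw [mem_ball] at hw hy
  have hwz : dist w z ≤ η1 + 3 * δ := by linarith [dist_triangle w z1 z]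
  have hw0 : dist w 0 ≤ 4 := by linarith [dist_triangle w z 0]
  have hy0 : dist y 0 ≤ 4 := by linarith [dist_triangle y x 0]
  obtain ⟨y2, w2, f1, f2, e2⟩ := h2 i j y w hy0 hw0 hyw
  have := hB z (by rw [mem_closedBall]; linarith) x (by rw [mem_closedBall]; linarith) y2
    (by rw [mem_closedBall]; linarith [dist_triangle y2 y 0]) w2 (by linarith [dist_triangle w2 w z]) hxz.symm e2.symm
  apply hwv
  refine ⟨y, ?_, hyw⟩
  rw [mem_closedBall]
  have h3 := dist_triangle y y2 x
  rw [dist_comm y y2] at h3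
  linarith

theorem step {k : ℕ} {M : Type} [TopologicalSpace M] [T2Space M] {h : Fin k → E3 → M}
    (hh : ∀ i, IsOpenEmbedding (h i)) (j : Fin k) {r r' : ℝ} (hr' : r' < r) (hr : r < 2)
    (H : PP h j r) : PP h (j + 1) r' := by
  intro η' hη'
  obtain ⟨r1, hr1', hr1⟩ := exists_between hr'
  let τ := min η' 1
  have hτ : 0 < τ := by positivity
  have hτ1 : τ ≤ 1 := min_le_right _ _
  have hτη : τ ≤ η' := min_le_left _ _
  have hA := fun i : Fin k => lemA (hh i).continuous (hh j).continuous (isCompact_closedBall (0 : E3) r')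
    (isCompact_closedBall (0 : E3) r') ((hh i).isOpenMap _ (isOpen_ball (x := (0 : E3)) (ε := r1))) (by
      rintro z hz x hx e
      exact ⟨z, closedBall_subset_ball hr1' hz, e⟩)
  choose s1 hs1 hA using hA
  have hB := fun i : Fin k => lemB (hh j).continuous (hh i).continuous (hh i).injective
    (isCompact_closedBall (0 : E3) 5) (τ := τ / 4) (by linarith)
  choose s2 hs2 hB using hB
  obtain ⟨t1, ht1, hA'⟩ := fin_min s1 hs1
  obtain ⟨t2, ht2, hB'⟩ := fin_min s2 hs2
  let σ := min (min t1 t2) τ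
  have hσ : 0 < σ := by positivity
  have hσ1 : σ ≤ t1 := (min_le_left _ _).trans (min_le_left _ _)
  have hσ2 : σ ≤ t2 := (min_le_left _ _).trans (min_le_right _ _)
  have hστ : σ ≤ τ := min_le_right _ _
  let K1 : Set M := ⋃ i : Fin k, ⋃ _ : i.1 < j.1, h i '' closedBall 0 r1
  have hK1 : IsClosed K1 := isClosed_iUnion_of_finite fun i => isClosed_iUnion_of_finite fun _ =>
    ((isCompact_closedBall _ _).image (hh i).continuous).isClosed
  have hK1W : K1 ⊆ WW h j r := by
    intro p hp
    simp only [K1, mem_iUnion] at hp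
    obtain ⟨i, hi, hp⟩ := hp
    exact ⟨i, hi, image_mono (closedBall_subset_ball hr1) hp⟩
  have hWK1 : WW h j r1 ⊆ K1 := by
    rintro p ⟨i, hi, hp⟩
    simp only [K1, mem_iUnion]
    exact ⟨i, hi, image_mono ball_subset_closedBall hp⟩
  have hWm : WW h j r' ⊆ WW h j r1 := by
    rintro p ⟨i, hi, hp⟩
    exact ⟨i, hi, image_mono (ball_subset_ball hr1'.le) hp⟩
  let U : Set E3 := h j ⁻¹' WW h j r ∩ ball 0 3
  let C : Set E3 := closedBall 0 r ∩ h j ⁻¹' K1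
  have hU : IsOpen U := ((isOpen_WW hh j r).preimage (hh j).continuous).inter isOpen_ball
  have hC : IsCompact C := (isCompact_closedBall _ _).inter_right (hK1.preimage (hh j).continuous)
  have hCU : C ⊆ U := fun x hx => ⟨hK1W hx.2, closedBall_subset_ball (by linarith) hx.1⟩
  obtain ⟨ε, hε, hext⟩ := extension hC hU hCU (σ / 4) (by linarith)
  let η := min ε (σ / 4)
  have hη : 0 < η := by positivity
  have hηε : η ≤ ε := min_le_left _ _
  have hησ : η ≤ σ / 4 := min_le_right _ _
  obtain ⟨δ0, hδ0, H⟩ := H η hη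
  let δ := min δ0 (σ / 8)
  have hδ : 0 < δ := by positivity
  have hδδ : δ ≤ δ0 := min_le_left _ _
  have hδσ : δ ≤ σ / 8 := min_le_right _ _
  refine ⟨δ, hδ, ?_⟩
  intro N _ _ g hg c1 c2
  obtain ⟨φ, G⟩ := H N g hg (c1.mono hδδ) (c2.mono hδδ)
  classical
  let f : E3 → E3 := fun x => if hx : x ∈ U then (G.n j x hx.2 hx.1).choose else x
  have hf1 : ∀ x ∈ U, g j (f x) = φ (h j x) := by
    intro x hx; simp only [f, dif_pos hx]; exact (G.n j x hx.2 hx.1).choose_spec.1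
  have hf2 : ∀ x ∈ U, dist (f x) x ≤ η := by
    intro x hx; simp only [f, dif_pos hx]; exact (G.n j x hx.2 hx.1).choose_spec.2
  have hcU : ContinuousOn (fun x => φ (h j x)) U :=
    G.c.comp (hh j).continuous.continuousOn (fun x hx => hx.1)
  obtain ⟨F, hF1, hF2⟩ := hext f
    (by
      rw [(hg j).isInducing.continuousOn_iff]
      exact hcU.congr hf1)
    (by
      intro x hx y hy e
      have : φ (h j x) = φ (h j y) := by rw [← hf1 x hx, ← hf1 y hy, e]
      exact (hh j).injective (G.i hx.1 hy.1 this))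
    (by
      intro V hV hVo
      have : f '' V = g j ⁻¹' (φ '' (h j '' V)) := by
        ext y; constructor
        · rintro ⟨x, hx, rfl⟩
          exact ⟨h j x, ⟨x, hx, rfl⟩, (hf1 x (hV hx)).symm⟩
        · rintro ⟨_, ⟨x, hx, rfl⟩, e⟩
          rw [← hf1 x (hV hx)] at e
          exact ⟨x, hx, (hg j).injective e⟩
      rw [this]
      refine (G.o _ ?_ ((hh j).isOpenMap _ hVo)).preimage (hg j).continuous
      rintro _ ⟨x, hx, rfl⟩
      exact (hV hx).1)
    (fun x hx => (hf2 x hx).trans hηε)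
  have hgF : ∀ x ∈ closedBall (0 : E3) r, h j x ∈ K1 → g j (F x) = φ (h j x) := by
    intro x hx hx'
    rw [hF2 x ⟨hx, hx'⟩, hf1 x (hCU ⟨hx, hx'⟩)]
  have : Nonempty E3 := ⟨0⟩
  let ψ : M → N := fun p => if p ∈ WW h j r' then φ p else g j (F (Function.invFun (h j) p))
  have hψ1 : ∀ p ∈ WW h j r', ψ p = φ p := fun p hp => if_pos hp
  have hψ2 : ∀ x ∈ ball (0 : E3) r', ψ (h j x) = g j (F x) := by
    intro x hx
    by_cases hp : h j x ∈ WW h j r'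
    · rw [hψ1 _ hp, hgF x (ball_subset_closedBall (ball_subset_ball hr'.le hx)) (hWK1 (hWm hp))]
    · simp only [ψ, if_neg hp]
      rw [Function.leftInverse_invFun (hh j).injective x]
  have hWs : ∀ p ∈ WW h (j + 1) r', p ∈ WW h j r' ∨ p ∈ h j '' ball 0 r' := by
    rintro p ⟨i, hi, hp⟩
    rcases Nat.lt_succ_iff_lt_or_eq.1 hi with hi | hi
    · exact Or.inl ⟨i, hi, hp⟩
    · right; rwa [← Fin.ext hi]
  have hsub : WW h j r' ⊆ WW h j r := hWm.trans (hWK1.trans hK1W)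
  have hO1 := isOpen_WW hh j r'
  have hO2 : IsOpen (h j '' ball 0 r') := (hh j).isOpenMap _ isOpen_ball
  have hinj : ∀ p ∈ WW h j r', ∀ x ∈ ball (0 : E3) r', φ p = g j (F x) → p = h j x := by
    rintro p hp x hx e
    obtain ⟨i, hi, z, hz, rfl⟩ := id hp
    obtain ⟨z', ez, dz⟩ := G.n i z (ball_subset_ball (by linarith) hz) (hsub hp)
    have hz0 := mem_ball.1 hz
    have hx0 := mem_ball.1 hx
    have hFx := hF1 x
    obtain ⟨z2, x2, d1, d2, e2⟩ := c2 i j z' (F x)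
      (by rw [mem_closedBall]; linarith [dist_triangle z' z 0])
      (by rw [mem_closedBall]; linarith [dist_triangle (F x) x 0]) (ez.trans e)
    have hxO := hA i z (ball_subset_closedBall hz) x (ball_subset_closedBall hx) z2 x2
      (by linarith [dist_triangle z2 z' z, hA' i]) (by linarith [dist_triangle x2 (F x) x, hA' i]) e2
    have hK : h j x ∈ K1 := hWK1 ⟨i, hi, hxO⟩
    rw [hgF x (ball_subset_closedBall (ball_subset_ball hr'.le hx)) hK] at e
    exact G.i (hsub hp) (hK1W hK) e
  refine ⟨ψ, ⟨?_, ?_, ?_, ?_⟩⟩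
  · intro p hp
    apply ContinuousAt.continuousWithinAt
    rcases hWs p hp with hp | ⟨x, hx, rfl⟩
    · have := (G.c.mono hsub).continuousAt (hO1.mem_nhds hp)
      apply this.congr
      filter_upwards [hO1.mem_nhds hp] with q hq using (hψ1 q hq).symm
    · rw [← (hh j).continuousAt_iff]
      have : ContinuousAt (fun x => g j (F x)) x := ((hg j).continuous.comp F.continuous).continuousAt
      apply this.congr
      filter_upwards [isOpen_ball.mem_nhds hx] with q hq using (hψ2 q hq).symm
  · intro p hp q hq e
    rcases hWs p hp with hp | ⟨x, hx, rfl⟩ <;> rcases hWs q hq with hq | ⟨y, hy, rfl⟩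
    · rw [hψ1 p hp, hψ1 q hq] at e
      exact G.i (hsub hp) (hsub hq) e
    · rw [hψ1 p hp, hψ2 y hy] at e
      exact hinj p hp y hy e
    · rw [hψ1 q hq, hψ2 x hx] at e
      exact (hinj q hq x hx e.symm).symm
    · rw [hψ2 x hx, hψ2 y hy] at e
      rw [F.injective ((hg j).injective e)]
  · intro V hV hVo
    have : ψ '' V = φ '' (V ∩ WW h j r') ∪ g j '' (F '' (h j ⁻¹' V ∩ ball 0 r')) := by
      ext y; constructor
      · rintro ⟨p, hp, rfl⟩
        rcases hWs p (hV hp) with hp' | ⟨x, hx, rfl⟩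
        · exact Or.inl ⟨p, ⟨hp, hp'⟩, (hψ1 p hp').symm⟩
        · exact Or.inr ⟨F x, ⟨x, ⟨hp, hx⟩, rfl⟩, (hψ2 x hx).symm⟩
      · rintro (⟨p, ⟨hp, hp'⟩, rfl⟩ | ⟨_, ⟨x, ⟨hp, hx⟩, rfl⟩, rfl⟩)
        · exact ⟨p, hp, hψ1 p hp'⟩
        · exact ⟨h j x, hp, hψ2 x hx⟩
    rw [this]
    apply IsOpen.union
    · exact G.o _ (inter_subset_right.trans hsub) (hVo.inter hO1)
    · exact (hg j).isOpenMap _ (F.isOpenMap _ ((hVo.preimage (hh j).continuous).inter isOpen_ball))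
  · intro i x hx hp
    rcases hWs _ hp with hp | ⟨z, hz, e⟩
    · obtain ⟨x', e, d⟩ := G.n i x hx (hsub hp)
      exact ⟨x', by rw [hψ1 _ hp, e], by linarith⟩
    · obtain ⟨x', e', d⟩ := near_aux hg hτ hτ1 hστ le_rfl hδ hδσ
        (fun z hz x hx y hy w d => hB i z hz x hx y hy w (by linarith [hB' i])) c1 c2 hx
        (ball_subset_ball (by linarith) hz) e.symm (hF1 z)
      exact ⟨x', by rw [← e, hψ2 z hz, e'], by linarith⟩

theorem PP_all {k : ℕ} {M : Type} [TopologicalSpace M] [T2Space M] {h : Fin k → E3 → M}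
    (hh : ∀ i, IsOpenEmbedding (h i)) (j : ℕ) (hj : j ≤ k) : ∀ r < 2, Nonempty (Fin k) → PP h j r := by
  induction j with
  | zero =>
    intro r hr ne η hη
    refine ⟨1, one_pos, ?_⟩
    intro N _ _ g hg _ _
    have hW : WW h 0 r = ∅ := by
      ext p; simp [WW]
    obtain ⟨i⟩ := ne
    refine ⟨fun _ => g i 0, ?_⟩
    rw [hW]
    exact ⟨continuousOn_empty _, injOn_empty _, fun V hV _ => by rw [subset_empty_iff.1 hV]; simp,
      fun i x hx hp => hp.elim⟩
  | succ j ih =>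
    intro r hr ne
    obtain ⟨r1, h1, h2⟩ := exists_between hr
    exact step hh ⟨j, hj⟩ h1 h2 (ih (by omega) r1 h2 ne)

theorem glue {k : ℕ} {M : Type} [TopologicalSpace M] [T2Space M] [CompactSpace M] [Nonempty M] {h : Fin k → E3 → M}
    (hh : ∀ i, IsOpenEmbedding (h i)) (hcov : ∀ p, ∃ i, p ∈ h i '' closedBall 0 1) :
    ∃ δ : ℝ, 0 < δ ∧ ∀ (N : Type) [TopologicalSpace N] [T2Space N] [ConnectedSpace N] (g : Fin k → E3 → N),
    (∀ i, IsOpenEmbedding (g i)) → Close δ h g → Close δ g h → Nonempty (M ≃ₜ N) := by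
  have ne : Nonempty (Fin k) := by
    obtain ⟨i, _⟩ := hcov (Classical.arbitrary M)
    exact ⟨i⟩
  obtain ⟨δ, hδ, H⟩ := PP_all hh k le_rfl (3 / 2) (by norm_num) ne 1 one_pos
  refine ⟨δ, hδ, ?_⟩
  intro N _ _ _ g hg c1 c2
  obtain ⟨φ, G⟩ := H N g hg c1 c2
  have hW : WW h k (3 / 2) = univ := by
    rw [eq_univ_iff_forall]
    intro p
    obtain ⟨i, hi⟩ := hcov p
    exact ⟨i, i.2, image_mono (closedBall_subset_ball (by norm_num)) hi⟩
  rw [hW] at G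
  have hc : Continuous φ := continuousOn_univ.1 G.c
  have hi : Function.Injective φ := injOn_univ.1 G.i
  have ho : IsOpenMap φ := fun V hV => G.o V (subset_univ _) hV
  have hs : Function.Surjective φ := by
    rw [← range_eq_univ]
    exact IsClopen.eq_univ ⟨(isCompact_range hc).isClosed, ho.isOpen_range⟩ (range_nonempty φ)
  exact ⟨(Equiv.ofBijective φ ⟨hi, hs⟩).toHomeomorphOfContinuousOpen hc ho⟩
theorem exists_chart (M : Type) [TopologicalSpace M] [ChartedSpace (EuclideanSpace ℝ (Fin 3)) M] (p : M) :
    ∃ h : E3 → M, IsOpenEmbedding h ∧ h 0 = p := by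
  let c := chartAt (EuclideanSpace ℝ (Fin 3)) p
  have hc : c p ∈ c.target := c.map_source (mem_chart_source _ p)
  obtain ⟨s, hs, hb⟩ := Metric.isOpen_iff.1 c.open_target (c p) hc
  let u := OpenPartialHomeomorph.univBall (c p) s
  have hsrc : (u.trans c.symm).source = univ := by
    rw [OpenPartialHomeomorph.trans_source, eq_univ_iff_forall]
    intro x
    have hx : x ∈ u.source := by
      simp only [u, OpenPartialHomeomorph.univBall_source, mem_univ]
    refine ⟨hx, ?_⟩
    have := u.map_source hx
    simp only [u, OpenPartialHomeomorph.univBall_target (c p) hs] at this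
    exact hb this
  have he := (u.trans c.symm).to_isOpenEmbedding hsrc
  let L := (EuclideanSpace.equiv (Fin 3) ℝ).symm.toHomeomorph
  refine ⟨(u.trans c.symm) ∘ L, he.comp L.isOpenEmbedding, ?_⟩
  have hL : L 0 = 0 := (EuclideanSpace.equiv (Fin 3) ℝ).symm.map_zero
  show c.symm (u (L 0)) = p
  rw [hL]
  simp only [u, OpenPartialHomeomorph.univBall_apply_zero]
  exact c.left_inv (mem_chart_source _ p)

theorem exists_charts (M : Type) [TopologicalSpace M] [CompactSpace M]
    [ChartedSpace (EuclideanSpace ℝ (Fin 3)) M] :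
    ∃ (k : ℕ) (h : Fin k → E3 → M), (∀ i, IsOpenEmbedding (h i)) ∧ ∀ p, ∃ i, p ∈ h i '' closedBall 0 1 := by
  choose H hH h0 using exists_chart M
  obtain ⟨t, ht⟩ := isCompact_univ.elim_finite_subcover (fun p => H p '' ball 0 1)
    (fun p => (hH p).isOpenMap _ isOpen_ball) (fun p _ => mem_iUnion.2 ⟨p, 0, mem_ball_self one_pos, h0 p⟩)
  refine ⟨t.card, fun i => H (t.equivFin.symm i).1, fun i => hH _, fun p => ?_⟩
  have := ht (mem_univ p)
  simp only [mem_iUnion] at this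
  obtain ⟨q, hq, hp⟩ := this
  refine ⟨t.equivFin ⟨q, hq⟩, ?_⟩
  simp only [Equiv.symm_apply_apply]
  exact image_mono ball_subset_closedBall hp

abbrev Cell (k : ℕ) := (Fin k × (Fin 3 → ℤ)) × (Fin k × (Fin 3 → ℤ))
abbrev Cert := Σ k : ℕ, ℕ × Finset (Cell k)

noncomputable def fl (m : ℕ) (x : E3) : Fin 3 → ℤ := fun a => ⌊(m : ℝ) * x a⌋

theorem fl_close {m : ℕ} (hm : 0 < m) {x y : E3} (h : fl m x = fl m y) : dist x y ≤ 1 / m := by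
  have hm' : (0 : ℝ) < m := by exact_mod_cast hm
  rw [dist_pi_le_iff (by positivity)]
  intro a
  have h1 : ⌊(m : ℝ) * x a⌋ = ⌊(m : ℝ) * y a⌋ := congrFun h a
  have h2 := Int.abs_sub_lt_one_of_floor_eq_floor h1
  rw [← mul_sub, abs_mul, abs_of_pos hm'] at h2
  rw [Real.dist_eq, le_div_iff₀ hm']
  linarith

def TT {k : ℕ} {M : Type} (m : ℕ) (h : Fin k → E3 → M) : Set (Cell k) :=
  {c | ∃ x y, x ∈ closedBall (0 : E3) 4 ∧ y ∈ closedBall (0 : E3) 4 ∧ h c.1.1 x = h c.2.1 y ∧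
    c.1.2 = fl m x ∧ c.2.2 = fl m y}

theorem fl_mem (m : ℕ) {x : E3} (hx : x ∈ closedBall (0 : E3) 4) :
    fl m x ∈ Set.pi Set.univ (fun _ : Fin 3 => Set.Icc (-(4 * m : ℤ)) (4 * m)) := by
  intro a _
  have h1 : |x a| ≤ 4 := by
    have := dist_le_pi_dist x 0 a
    rw [Pi.zero_apply, Real.dist_0_eq_abs] at this
    exact this.trans hx
  have h2 := abs_le.1 h1
  have hm' : (0 : ℝ) ≤ m := by positivity
  constructor
  · apply Int.le_floor.2
    push_cast
    nlinarith
  · have : ((⌊(m : ℝ) * x a⌋ : ℤ) : ℝ) ≤ ((4 * m : ℤ) : ℝ) := by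
      refine (Int.floor_le _).trans ?_
      push_cast
      nlinarith
    exact_mod_cast this

theorem TT_finite {k : ℕ} {M : Type} (m : ℕ) (h : Fin k → E3 → M) : (TT m h).Finite := by
  have hp : (Set.pi Set.univ (fun _ : Fin 3 => Set.Icc (-(4 * m : ℤ)) (4 * m))).Finite :=
    Set.Finite.pi (fun _ => Set.finite_Icc _ _)
  have hq : ((Set.univ : Set (Fin k)) ×ˢ (Set.pi Set.univ (fun _ : Fin 3 => Set.Icc (-(4 * m : ℤ)) (4 * m)))).Finite :=
    Set.finite_univ.prod hp
  apply (hq.prod hq).subset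
  rintro ⟨⟨i, u⟩, ⟨j, v⟩⟩ ⟨x, y, hx, hy, _, hu, hv⟩
  simp only at hu hv
  subst hu hv
  exact ⟨⟨mem_univ _, fl_mem m hx⟩, ⟨mem_univ _, fl_mem m hy⟩⟩

theorem TT_close {k : ℕ} {M N : Type} {m : ℕ} (hm : 0 < m) {h : Fin k → E3 → M} {g : Fin k → E3 → N}
    (e : TT m h ⊆ TT m g) : Close (1 / m) h g := by
  intro i j x y hx hy hxy
  obtain ⟨x', y', _, _, e1, e2, e3⟩ := e (show ((i, fl m x), (j, fl m y)) ∈ TT m h from ⟨x, y, hx, hy, hxy, rfl, rfl⟩)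
  exact ⟨x', y', fl_close hm e2.symm, fl_close hm e3.symm, e1⟩

def IsCert (M : Closed3Manifold) (c : Cert) : Prop :=
  ∃ h : Fin c.1 → E3 → M.carrier, (∀ i, IsOpenEmbedding (h i)) ∧ 0 < c.2.1 ∧ (c.2.2 : Set (Cell c.1)) = TT c.2.1 h ∧
    ∀ (N : Type) [TopologicalSpace N] [T2Space N] [ConnectedSpace N] (g : Fin c.1 → E3 → N),
    (∀ i, IsOpenEmbedding (g i)) → Close (1 / c.2.1) h g → Close (1 / c.2.1) g h → Nonempty (M.carrier ≃ₜ N)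

theorem exists_cert (M : Closed3Manifold) : ∃ c, IsCert M c := by
  obtain ⟨k, h, hh, hcov⟩ := exists_charts M.carrier
  obtain ⟨δ, hδ, H⟩ := glue hh hcov
  obtain ⟨n, hn⟩ := exists_nat_one_div_lt hδ
  have hn' : (1 : ℝ) / ((n + 1 : ℕ) : ℝ) ≤ δ := by push_cast; exact hn.le
  refine ⟨⟨k, n + 1, (TT_finite (n + 1) h).toFinset⟩, h, hh, Nat.succ_pos n, by simp, ?_⟩
  intro N _ _ _ g hg c1 c2
  exact H N g hg (c1.mono hn') (c2.mono hn')

theorem cert_homeo {M N : Closed3Manifold} {c : Cert} (hM : IsCert M c) (hN : IsCert N c) :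
    Nonempty (M.carrier ≃ₜ N.carrier) := by
  obtain ⟨h, hh, hm, hT, H⟩ := hM
  obtain ⟨g, hg, _, hT', _⟩ := hN
  have e : TT c.2.1 h = TT c.2.1 g := hT.symm.trans hT'
  exact H N.carrier g hg (TT_close hm e.subset) (TT_close hm e.superset)

/-- Up to homeomorphism there are only countably many closed 3-manifolds: there is a
countable family of closed 3-manifolds such that every closed 3-manifold is homeomorphic
to a member of the family. -/
theorem countably_many_closed_3manifolds :
    ∃ (ι : Type) (M : ι → Closed3Manifold),
      Countable ι ∧
      ∀ N : Closed3Manifold, ∃ i : ι, Nonempty (N.carrier ≃ₜ (M i).carrier) := by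
  refine ⟨{c : Cert // ∃ M, IsCert M c}, fun c => c.2.choose, inferInstance, fun N => ?_⟩
  obtain ⟨c, hc⟩ := exists_cert N
  exact ⟨⟨c, N, hc⟩, cert_homeo hc (Exists.choose_spec (⟨N, hc⟩ : ∃ M, IsCert M c))⟩
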